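/- Let n ≥ 1 be an integer, α ∈ (0,n), β > 0 and A > 0, and assume α < β. For each m > 0 let E_m be a minimizer at mass m of E_{α,β,A}, and let E_m* = (|B|/m)^{1/n} E_m be its rescaling to volume |B|. Then the Hausdorff distance between the essential boundary of E_m* and the unit sphere ∂B tends to 0 as m → +∞. -/

import Mathlib

open MeasureTheory Metric Filter ENNReal Pointwise

noncomputable section

/-- The Lebesgue density of `E` at `x` equals `d`. -/
def HasDensity {n : ℕ} (E : Set (EuclideanSpace ℝ (Fin n)))
    (x : EuclideanSpace ℝ (Fin n)) (d : ℝ) : Prop :=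
  Filter.Tendsto
    (fun r : ℝ => (volume (E ∩ Metric.ball x r)).toReal / (volume (Metric.ball x r)).toReal)
    (nhdsWithin 0 (Set.Ioi 0)) (nhds d)

/-- The essential boundary of `E`: points where `E` has neither density 0 nor density 1. -/
def essBoundary {n : ℕ} (E : Set (EuclideanSpace ℝ (Fin n))) :
    Set (EuclideanSpace ℝ (Fin n)) :=
  {x | ¬ HasDensity E x 0 ∧ ¬ HasDensity E x 1}

/-- The perimeter of `E`: the `(n-1)`-dimensional Hausdorff measure of the essential
boundary of `E`. -/
def perimeter {n : ℕ} (E : Set (EuclideanSpace ℝ (Fin n))) : ℝ≥0∞ :=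
  μH[(n : ℝ) - 1] (essBoundary E)

/-- The Riesz energy `V_α(E) = ∫_{E×E} |x-y|^(α-n) dx dy`. -/
def rieszEnergy {n : ℕ} (α : ℝ) (E : Set (EuclideanSpace ℝ (Fin n))) : ℝ≥0∞ :=
  ∫⁻ x in E, ∫⁻ y in E, ENNReal.ofReal (‖x - y‖ ^ (α - (n : ℝ)))

/-- The potential energy `U_{β,A}(E) = A ∫_E |x|^β dx`. -/
def potEnergy {n : ℕ} (β A : ℝ) (E : Set (EuclideanSpace ℝ (Fin n))) : ℝ≥0∞ :=
  ∫⁻ x in E, ENNReal.ofReal (A * ‖x‖ ^ β)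

/-- The total energy `E_{α,β,A} = P + V_α + U_{β,A}`. -/
def totalEnergy {n : ℕ} (α β A : ℝ) (E : Set (EuclideanSpace ℝ (Fin n))) : ℝ≥0∞ :=
  perimeter E + rieszEnergy α E + potEnergy β A E

/-- `E` is a minimizer of `E_{α,β,A}` at mass `m`. -/
def IsMinimizer {n : ℕ} (α β A m : ℝ) (E : Set (EuclideanSpace ℝ (Fin n))) : Prop :=
  MeasurableSet E ∧ volume E = ENNReal.ofReal m ∧
    ∀ F : Set (EuclideanSpace ℝ (Fin n)), MeasurableSet F → volume F = ENNReal.ofReal m →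
      totalEnergy α β A E ≤ totalEnergy α β A F

/-- The unit ball of `ℝⁿ` centered at the origin. -/
def unitBall (n : ℕ) : Set (EuclideanSpace ℝ (Fin n)) := Metric.ball 0 1



abbrev XX (n : ℕ) := EuclideanSpace ℝ (Fin n)

theorem vol_ball_pos {n : ℕ} (x : XX n) {r : ℝ} (hr : 0 < r) :
    0 < (volume (ball x r)).toReal :=
  ENNReal.toReal_pos (measure_ball_pos volume x hr).ne' measure_ball_lt_top.ne

theorem vol_inter_ne_top {n : ℕ} (E : Set (XX n)) (x : XX n) (r : ℝ) :
    volume (E ∩ ball x r) ≠ ∞ :=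
  ((measure_mono Set.inter_subset_right).trans_lt measure_ball_lt_top).ne

theorem hasDensity_compl {n : ℕ} {E : Set (XX n)} (hE : MeasurableSet E) {x : XX n} {d : ℝ}
    (h : HasDensity E x d) : HasDensity Eᶜ x (1 - d) := by
  unfold HasDensity at *
  refine (tendsto_const_nhds.sub h).congr' ?_
  filter_upwards [self_mem_nhdsWithin] with r hr
  have hr : 0 < r := hr
  have h1 : volume (ball x r) = volume (E ∩ ball x r) + volume (Eᶜ ∩ ball x r) := by
    rw [← measure_inter_add_diff (ball x r) hE, Set.inter_comm, Set.diff_eq, Set.inter_comm Eᶜ]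
  have h2 := congrArg ENNReal.toReal h1
  rw [ENNReal.toReal_add (vol_inter_ne_top _ _ _) (vol_inter_ne_top _ _ _)] at h2
  have h3 := vol_ball_pos x hr
  field_simp
  linarith

theorem hasDensity_congr {n : ℕ} {E E' : Set (XX n)} {x : XX n} {d ρ : ℝ} (hρ : 0 < ρ)
    (hEE : E ∩ ball x ρ = E' ∩ ball x ρ) (h : HasDensity E x d) : HasDensity E' x d := by
  unfold HasDensity at *
  refine h.congr' ?_
  filter_upwards [Ioo_mem_nhdsGT hρ] with r hr
  have hb : ball x r ⊆ ball x ρ := ball_subset_ball hr.2.le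
  have : E ∩ ball x r = E' ∩ ball x r := by
    rw [← Set.inter_eq_self_of_subset_right hb, ← Set.inter_assoc, ← Set.inter_assoc, hEE]
  rw [this]

theorem hasDensity_zero_mono {n : ℕ} {E E' : Set (XX n)} {x : XX n} {ρ : ℝ} (hρ : 0 < ρ)
    (hEE : E ∩ ball x ρ ⊆ E') (h : HasDensity E' x 0) : HasDensity E x 0 := by
  unfold HasDensity at *
  refine tendsto_of_tendsto_of_tendsto_of_le_of_le' tendsto_const_nhds h ?_ ?_
  · exact Eventually.of_forall fun r => by positivity
  · filter_upwards [Ioo_mem_nhdsGT hρ] with r hr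
    have hb : ball x r ⊆ ball x ρ := ball_subset_ball hr.2.le
    gcongr ?_ / _
    refine ENNReal.toReal_mono (vol_inter_ne_top _ _ _) (measure_mono ?_)
    intro y hy
    exact ⟨hEE ⟨hy.1, hb hy.2⟩, hy.2⟩

theorem hasDensity_zero_of_null {n : ℕ} {E : Set (XX n)} {x : XX n} {ρ : ℝ} (hρ : 0 < ρ)
    (hE : volume (E ∩ ball x ρ) = 0) : HasDensity E x 0 := by
  unfold HasDensity
  refine tendsto_const_nhds.congr' ?_
  filter_upwards [Ioo_mem_nhdsGT hρ] with r hr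
  have hb : ball x r ⊆ ball x ρ := ball_subset_ball hr.2.le
  rw [measure_mono_null (Set.inter_subset_inter_right E hb) hE]
  simp

theorem hasDensity_one_iff {n : ℕ} {E : Set (XX n)} (hE : MeasurableSet E) {x : XX n} :
    HasDensity E x 1 ↔ HasDensity Eᶜ x 0 := by
  constructor
  · intro h; simpa using hasDensity_compl hE h
  · intro h; simpa using hasDensity_compl hE.compl h

theorem hasDensity_zero_iff {n : ℕ} {E : Set (XX n)} (hE : MeasurableSet E) {x : XX n} :
    HasDensity E x 0 ↔ HasDensity Eᶜ x 1 := by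
  rw [hasDensity_one_iff hE.compl, compl_compl]

theorem hasDensity_one_of_null {n : ℕ} {E : Set (XX n)} (hE : MeasurableSet E)
    {x : XX n} {ρ : ℝ} (hρ : 0 < ρ)
    (h : volume (ball x ρ \ E) = 0) : HasDensity E x 1 := by
  rw [hasDensity_one_iff hE]
  apply hasDensity_zero_of_null hρ
  rwa [Set.inter_comm, ← Set.diff_eq]

theorem essBoundary_compl {n : ℕ} {E : Set (XX n)} (hE : MeasurableSet E) :
    essBoundary Eᶜ = essBoundary E := by
  ext x
  simp only [essBoundary, Set.mem_setOf_eq]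
  rw [hasDensity_zero_iff hE, hasDensity_one_iff hE]
  tauto

theorem ae_hasDensity {n : ℕ} [NeZero n] {E : Set (XX n)} (hE : MeasurableSet E) :
    ∀ᵐ x, x ∈ E → HasDensity E x 1 := by
  filter_upwards [Besicovitch.ae_tendsto_measure_inter_div_of_measurableSet volume hE] with x hx hxE
  rw [Set.indicator_of_mem hxE] at hx
  have := (ENNReal.tendsto_toReal (by simp)).comp hx
  simp only [Pi.one_apply, toReal_one] at this
  unfold HasDensity
  refine this.congr fun r => ?_
  simp only [Function.comp]
  rw [ENNReal.toReal_div]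
  have h0 : volume (sphere x r) = 0 := Measure.addHaar_sphere volume x r
  have hae : (closedBall x r : Set (XX n)) =ᵐ[volume] ball x r := by
    rw [← ball_union_sphere]
    exact union_ae_eq_left_of_ae_eq_empty (ae_eq_empty.2 h0)
  rw [measure_congr hae, measure_congr ((ae_eq_refl E).inter hae)]

theorem vol_smul_inter_ball {n : ℕ} {c : ℝ} (hc : 0 < c) (E : Set (XX n)) (x : XX n) (r : ℝ) :
    volume ((c • E) ∩ ball (c • x) (c * r)) = ENNReal.ofReal (c ^ n) * volume (E ∩ ball x r) := by
  have h1 : ball (c • x) (c * r) = c • ball x r := by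
    rw [_root_.smul_ball hc.ne', Real.norm_of_nonneg hc.le]
  rw [h1, ← Set.smul_set_inter₀ hc.ne', Measure.addHaar_smul]
  simp [abs_of_pos hc]

theorem hasDensity_smul {n : ℕ} {c : ℝ} (hc : 0 < c) {E : Set (XX n)} {x : XX n} {d : ℝ}
    (h : HasDensity E x d) : HasDensity (c • E) (c • x) d := by
  unfold HasDensity at *
  have ht : Tendsto (fun r : ℝ => c⁻¹ * r) (nhdsWithin 0 (Set.Ioi 0))
      (nhdsWithin 0 (Set.Ioi 0)) := by
    refine tendsto_nhdsWithin_iff.2 ⟨?_, ?_⟩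
    · have : Tendsto (fun r : ℝ => c⁻¹ * r) (nhds 0) (nhds (c⁻¹ * 0)) :=
        (continuous_const.mul continuous_id).tendsto 0
      rw [mul_zero] at this
      exact this.mono_left nhdsWithin_le_nhds
    · filter_upwards [self_mem_nhdsWithin] with r hr
      exact mul_pos (inv_pos.2 hc) hr
  refine (h.comp ht).congr' ?_
  filter_upwards [self_mem_nhdsWithin] with r hr
  have hr : 0 < r := hr
  have e1 := vol_smul_inter_ball hc E x (c⁻¹ * r)
  have e2 := vol_smul_inter_ball hc Set.univ x (c⁻¹ * r)
  rw [Set.smul_set_univ₀ hc.ne', Set.univ_inter, Set.univ_inter] at e2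
  rw [mul_inv_cancel_left₀ hc.ne'] at e1 e2
  simp only [Function.comp]
  rw [e1, e2, ENNReal.toReal_mul, ENNReal.toReal_mul, mul_div_mul_left]
  rw [ENNReal.toReal_ofReal (by positivity)]
  positivity

theorem essBoundary_smul {n : ℕ} {c : ℝ} (hc : 0 < c) (E : Set (XX n)) :
    essBoundary (c • E) = c • essBoundary E := by
  have key : ∀ {c : ℝ} (_ : 0 < c) (E : Set (XX n)) (x : XX n) (d : ℝ),
      HasDensity (c • E) (c • x) d ↔ HasDensity E x d := by
    intro c hc E x d
    refine ⟨fun h => ?_, hasDensity_smul hc⟩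
    have := hasDensity_smul (inv_pos.2 hc) h
    rwa [inv_smul_smul₀ hc.ne', inv_smul_smul₀ hc.ne'] at this
  ext y
  rw [Set.mem_smul_set_iff_inv_smul_mem₀ hc.ne']
  simp only [essBoundary, Set.mem_setOf_eq]
  rw [← key hc E (c⁻¹ • y), ← key hc E (c⁻¹ • y), smul_inv_smul₀ hc.ne']

theorem perimeter_smul {n : ℕ} [NeZero n] {c : ℝ} (hc : 0 < c) (E : Set (XX n)) :
    perimeter (c • E) = ENNReal.ofReal (c ^ ((n : ℝ) - 1)) * perimeter E := by
  unfold perimeter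
  have hn : (0 : ℝ) ≤ (n : ℝ) - 1 := by
    have : 1 ≤ n := NeZero.one_le
    have : (1 : ℝ) ≤ n := by exact_mod_cast this
    linarith
  rw [essBoundary_smul hc, Measure.hausdorffMeasure_smul₀ hn hc.ne', ENNReal.smul_def, smul_eq_mul]
  congr 1
  rw [ENNReal.ofReal]
  congr 1
  apply NNReal.eq
  rw [Real.coe_toNNReal _ (by positivity), NNReal.coe_rpow, coe_nnnorm, Real.norm_of_nonneg hc.le]

theorem essBoundary_union_subset {n : ℕ} {F D : Set (XX n)} (hF : MeasurableSet F)
    (hD : MeasurableSet D) :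
    essBoundary (F ∪ D) ⊆ (essBoundary F \ closure D) ∪ (frontier D \ {x | HasDensity F x 1}) := by
  rintro x ⟨h0, h1⟩
  by_cases hx : x ∈ frontier D
  · right
    refine ⟨hx, fun h => h1 ?_⟩
    rw [hasDensity_one_iff (hF.union hD)]
    rw [Set.mem_setOf_eq, hasDensity_one_iff hF] at h
    exact hasDensity_zero_mono one_pos
      (Set.inter_subset_left.trans (Set.compl_subset_compl.2 Set.subset_union_left)) h
  · left
    by_cases hc : x ∈ closure D
    · exfalso
      have hi : x ∈ interior D := by
        by_contra hi; exact hx ⟨hc, hi⟩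
      obtain ⟨ρ, hρ, hb⟩ := Metric.mem_nhds_iff.1 (mem_interior_iff_mem_nhds.1 hi)
      refine h1 (hasDensity_one_of_null (hF.union hD) hρ ?_)
      rw [Set.diff_eq_empty.2 (hb.trans Set.subset_union_right)]
      simp
    · obtain ⟨ρ, hρ, hb⟩ := Metric.mem_nhds_iff.1 (isClosed_closure.isOpen_compl.mem_nhds hc)
      have he : F ∩ ball x ρ = (F ∪ D) ∩ ball x ρ := by
        ext y
        constructor
        · exact fun h => ⟨Or.inl h.1, h.2⟩
        · rintro ⟨h | h, h'⟩
          · exact ⟨h, h'⟩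
          · exact absurd (subset_closure h) (hb h')
      exact ⟨⟨fun h => h0 (hasDensity_congr hρ he h), fun h => h1 (hasDensity_congr hρ he h)⟩, hc⟩

theorem essBoundary_diff_subset {n : ℕ} {F D : Set (XX n)} (hF : MeasurableSet F)
    (hD : MeasurableSet D) :
    essBoundary (D \ F) ⊆ (essBoundary F ∩ closure D) ∪ (frontier D \ {x | HasDensity F x 1}) := by
  rintro x ⟨h0, h1⟩
  by_cases hx : x ∈ frontier D
  · right
    refine ⟨hx, fun h => h0 ?_⟩
    rw [Set.mem_setOf_eq, hasDensity_one_iff hF] at h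
    exact hasDensity_zero_mono one_pos (fun y hy => hy.1.2) h
  · left
    by_cases hc : x ∈ closure D
    · have hi : x ∈ interior D := by
        by_contra hi; exact hx ⟨hc, hi⟩
      obtain ⟨ρ, hρ, hb⟩ := Metric.mem_nhds_iff.1 (mem_interior_iff_mem_nhds.1 hi)
      have he : Fᶜ ∩ ball x ρ = (D \ F) ∩ ball x ρ := by
        ext y
        constructor
        · exact fun h => ⟨⟨hb h.2, h.1⟩, h.2⟩
        · exact fun h => ⟨h.1.2, h.2⟩
      refine ⟨?_, hc⟩
      rw [← essBoundary_compl hF]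
      exact ⟨fun h => h0 (hasDensity_congr hρ he h), fun h => h1 (hasDensity_congr hρ he h)⟩
    · exfalso
      obtain ⟨ρ, hρ, hb⟩ := Metric.mem_nhds_iff.1 (isClosed_closure.isOpen_compl.mem_nhds hc)
      refine h0 (hasDensity_zero_of_null hρ ?_)
      convert measure_empty (μ := (volume : Measure (XX n)))
      ext y
      simp only [Set.mem_inter_iff, Set.mem_empty_iff_false, iff_false]
      exact fun h => hb h.2 (subset_closure h.1.1)



theorem preconn_inter_frontier {X : Type*} [TopologicalSpace X] {t s : Set X}
    (ht : IsPreconnected t) (h1 : (t ∩ s).Nonempty) (h2 : (t ∩ sᶜ).Nonempty) :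
    (t ∩ frontier s).Nonempty := by
  by_contra hne
  rw [Set.not_nonempty_iff_eq_empty] at hne
  have hcov : t ⊆ interior s ∪ interior sᶜ := by
    intro x hx
    by_contra hx'
    have : x ∈ t ∩ frontier s := by
      refine ⟨hx, ?_⟩
      rw [frontier_eq_closure_inter_closure]
      constructor
      · by_contra h; exact hx' (Or.inr (by rwa [interior_compl]))
      · by_contra h; rw [closure_compl] at h; exact hx' (Or.inl (not_not.1 h))
    rw [hne] at this; exact this
  have m1 : (t ∩ interior s).Nonempty := by
    obtain ⟨x, hx, hs⟩ := h1
    rcases hcov hx with h | h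
    · exact ⟨x, hx, h⟩
    · exact absurd hs (interior_subset h)
  have m2 : (t ∩ interior sᶜ).Nonempty := by
    obtain ⟨x, hx, hs⟩ := h2
    rcases hcov hx with h | h
    · exact absurd (interior_subset h) hs
    · exact ⟨x, hx, h⟩
  obtain ⟨x, _, h, h'⟩ := ht _ _ isOpen_interior isOpen_interior hcov m1 m2
  exact interior_subset h' (interior_subset h)

theorem line_helper (C a : Set ℝ) (d ε : ℝ) (hd : d ∈ frontier C) (hε : 0 < ε)
    (hsub : ∀ t ∈ frontier C, |t - d| < ε → t ∈ a) (haC : a ⊆ C) :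
    (∃ t ∈ a, ∃ s > 0, ∀ u ∈ Set.Ioo (0:ℝ) s, t + u ∉ C) ∨
    (∃ t ∈ a, ∃ s > 0, ∀ u ∈ Set.Ioo (0:ℝ) s, t + -u ∉ C) := by
  have hdc : d ∈ closure Cᶜ := by
    rw [frontier_eq_closure_inter_closure] at hd; exact hd.2
  obtain ⟨y, hyC, hyd⟩ := Metric.mem_closure_iff.1 hdc ε hε
  rw [Real.dist_eq, abs_sub_comm] at hyd
  have hda : d ∈ a := hsub d hd (by simpa using hε)
  have hyd' : y ≠ d := fun h => hyC (h ▸ haC hda)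
  have hcl : IsClosed (frontier C) := isClosed_frontier
  rcases lt_or_gt_of_ne hyd' with hlt | hlt
  · right
    have hcomp : IsCompact (frontier C ∩ Set.Icc y d) := isCompact_Icc.inter_left hcl
    obtain ⟨e, he, hmin⟩ := hcomp.exists_isLeast ⟨d, hd, hlt.le, le_rfl⟩
    have hea : e ∈ a := hsub e he.1 (by
      rw [abs_lt] at *; constructor <;> linarith [he.2.1, he.2.2])
    have hye : y < e := lt_of_le_of_ne he.2.1 (fun h => hyC (h ▸ haC hea))
    refine ⟨e, hea, e - y, by linarith, fun u hu hC => ?_⟩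
    have hpre : IsPreconnected (Set.Ico y e) := isPreconnected_Ico
    obtain ⟨t, ht, htf⟩ := preconn_inter_frontier hpre (s := C)
      ⟨e + -u, ⟨by linarith [hu.2], by linarith [hu.1]⟩, hC⟩ ⟨y, ⟨le_rfl, hye⟩, hyC⟩
    exact absurd (hmin ⟨htf, ht.1, ht.2.le.trans he.2.2⟩) (not_le.2 ht.2)
  · left
    have hcomp : IsCompact (frontier C ∩ Set.Icc d y) := isCompact_Icc.inter_left hcl
    obtain ⟨e, he, hmax⟩ := hcomp.exists_isGreatest ⟨d, hd, le_rfl, hlt.le⟩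
    have hea : e ∈ a := hsub e he.1 (by
      rw [abs_lt] at *; constructor <;> linarith [he.2.1, he.2.2])
    have hye : e < y := lt_of_le_of_ne he.2.2 (fun h => hyC (h ▸ haC hea))
    refine ⟨e, hea, y - e, by linarith, fun u hu hC => ?_⟩
    have hpre : IsPreconnected (Set.Ioc e y) := isPreconnected_Ioc
    obtain ⟨t, ht, htf⟩ := preconn_inter_frontier hpre (s := C)
      ⟨e + u, ⟨by linarith [hu.1], by linarith [hu.2]⟩, hC⟩ ⟨y, ⟨hye, le_rfl⟩, hyC⟩
    exact absurd (hmax ⟨htf, he.2.1.trans ht.1.le, ht.2⟩) (not_le.2 ht.1)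

theorem line_lemma (A B : ℕ → Set ℝ) (hA : ∀ j, IsClosed (A j)) (hB : ∀ j, IsClosed (B j))
    (hcov : ∀ t, (∃ j, t ∈ A j) ∨ (∃ j, t ∈ B j)) (hdisj : ∀ i j t, t ∈ A i → t ∉ B j)
    (hA1 : ∀ j, ∀ t ∈ A j, ∀ s > 0, ¬ ∀ u ∈ Set.Ioo (0:ℝ) s, ∃ i, t + u ∈ B i)
    (hA2 : ∀ j, ∀ t ∈ A j, ∀ s > 0, ¬ ∀ u ∈ Set.Ioo (0:ℝ) s, ∃ i, t + -u ∈ B i)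
    (hB1 : ∀ j, ∀ t ∈ B j, ∀ s > 0, ¬ ∀ u ∈ Set.Ioo (0:ℝ) s, ∃ i, t + u ∈ A i)
    (hB2 : ∀ j, ∀ t ∈ B j, ∀ s > 0, ¬ ∀ u ∈ Set.Ioo (0:ℝ) s, ∃ i, t + -u ∈ A i) :
    (∀ t, ∃ j, t ∈ A j) ∨ (∀ t, ∃ j, t ∈ B j) := by
  set C : Set ℝ := ⋃ j, A j with hC
  have hCc : Cᶜ = ⋃ j, B j := by
    ext t
    constructor
    · intro h
      rcases hcov t with ⟨j, hj⟩ | h'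
      · exact absurd (Set.mem_iUnion.2 ⟨j, hj⟩) h
      · exact Set.mem_iUnion.2 h'
    · intro h h'
      obtain ⟨j, hj⟩ := Set.mem_iUnion.1 h
      obtain ⟨i, hi⟩ := Set.mem_iUnion.1 h'
      exact hdisj i j t hi hj
  have memC : ∀ t, t ∉ C → ∃ i, t ∈ B i := fun t ht => by
    have : t ∈ Cᶜ := ht
    rw [hCc] at this; exact Set.mem_iUnion.1 this
  have memC' : ∀ t, t ∉ Cᶜ → ∃ i, t ∈ A i := fun t ht => by
    have : t ∈ C := not_not.1 ht
    exact Set.mem_iUnion.1 this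
  by_cases hfr : frontier C = ∅
  · rcases isClopen_iff.1 (isClopen_iff_frontier_eq_empty.2 hfr) with h | h
    · right; intro t; exact memC t (by simp [h])
    · left; intro t
      have : t ∈ C := by rw [h]; trivial
      exact Set.mem_iUnion.1 this
  exfalso
  have hne : (frontier C).Nonempty := Set.nonempty_iff_ne_empty.2 hfr
  have : Nonempty (frontier C) := hne.to_subtype
  have : CompleteSpace (frontier C) := (isClosed_frontier (s := C)).completeSpace_coe
  let Z : ℕ ⊕ ℕ → Set (frontier C) := fun i =>
    Sum.elim (fun j => (Subtype.val : frontier C → ℝ) ⁻¹' A j)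
      (fun j => (Subtype.val : frontier C → ℝ) ⁻¹' B j) i
  have hZc : ∀ i, IsClosed (Z i) := by
    rintro (j | j)
    · exact (hA j).preimage continuous_subtype_val
    · exact (hB j).preimage continuous_subtype_val
  have hZu : ⋃ i, Z i = Set.univ := by
    rw [Set.eq_univ_iff_forall]
    intro t
    rcases hcov t.1 with ⟨j, hj⟩ | ⟨j, hj⟩
    · exact Set.mem_iUnion.2 ⟨Sum.inl j, hj⟩
    · exact Set.mem_iUnion.2 ⟨Sum.inr j, hj⟩
  obtain ⟨i, d, hd⟩ := nonempty_interior_of_iUnion_of_closed hZc hZu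
  obtain ⟨ε, hε, hb⟩ := Metric.mem_nhds_iff.1 (mem_interior_iff_mem_nhds.1 hd)
  have hsub : ∀ t (ht : t ∈ frontier C), |t - d.1| < ε → (⟨t, ht⟩ : frontier C) ∈ Z i := by
    intro t ht h
    exact hb (by rw [mem_ball, Subtype.dist_eq, Real.dist_eq]; exact h)
  rcases i with j | j
  · rcases line_helper C (A j) d.1 ε d.2 hε (fun t ht h => hsub t ht h)
      (Set.subset_iUnion A j) with ⟨t, ht, s, hs, h⟩ | ⟨t, ht, s, hs, h⟩
    · exact hA1 j t ht s hs fun u hu => memC _ (h u hu)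
    · exact hA2 j t ht s hs fun u hu => memC _ (h u hu)
  · rcases line_helper Cᶜ (B j) d.1 ε (by rw [frontier_compl]; exact d.2) hε
      (fun t ht h => hsub t (by rwa [frontier_compl] at ht) h)
      (by rw [hCc]; exact Set.subset_iUnion B j) with ⟨t, ht, s, hs, h⟩ | ⟨t, ht, s, hs, h⟩
    · exact hB1 j t ht s hs fun u hu => memC' _ (h u hu)
    · exact hB2 j t ht s hs fun u hu => memC' _ (h u hu)



abbrev PP (k : ℕ) := ℝ × (Fin k → ℝ)

def thick {k : ℕ} (G : Set (PP k)) (j : ℕ) : Set (PP k) :=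
  {x | ∀ r ∈ Set.Ioo (0:ℝ) (1 / ((j:ℝ) + 1)),
    2 * volume (ball x (3 * r) \ G) ≤ ENNReal.ofReal (r ^ (k + 1))}

/-- lower semicontinuity of the measure of a moving ball -/
theorem isOpen_ball_measure {X : Type*} [PseudoMetricSpace X] [MeasurableSpace X]
    (μ : Measure X) (G : Set X) (r : ℝ) (c : ℝ≥0∞) :
    IsOpen {x | c < μ (G ∩ ball x r)} := by
  rw [Metric.isOpen_iff]
  intro x hx
  have hmono : Monotone fun m : ℕ => G ∩ ball x (r - 1 / ((m:ℝ) + 1)) := by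
    intro a b hab
    refine Set.inter_subset_inter_right _ (ball_subset_ball ?_)
    have := Nat.one_div_le_one_div (α := ℝ) hab
    linarith
  have hU : G ∩ ball x r = ⋃ m : ℕ, G ∩ ball x (r - 1 / ((m:ℝ) + 1)) := by
    ext y
    simp only [Set.mem_iUnion, Set.mem_inter_iff, mem_ball]
    constructor
    · rintro ⟨hy, hd⟩
      obtain ⟨m, hm⟩ := exists_nat_one_div_lt (sub_pos.2 hd)
      exact ⟨m, hy, by linarith⟩
    · rintro ⟨m, hy, hd⟩
      have : (0:ℝ) < 1 / ((m:ℝ) + 1) := Nat.one_div_pos_of_nat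
      exact ⟨hy, by linarith⟩
  have hx' : c < μ (G ∩ ball x r) := hx
  rw [hU, hmono.measure_iUnion, lt_iSup_iff] at hx'
  obtain ⟨m, hm⟩ := hx'
  refine ⟨1 / ((m:ℝ) + 1), Nat.one_div_pos_of_nat, fun y hy => ?_⟩
  refine hm.trans_le (measure_mono (Set.inter_subset_inter_right _ ?_))
  apply ball_subset_ball'
  rw [mem_ball, dist_comm] at hy
  linarith

theorem thick_closed {k : ℕ} (G : Set (PP k)) (j : ℕ) : IsClosed (thick G j) := by
  have : thick G j = ⋂ r ∈ Set.Ioo (0:ℝ) (1 / ((j:ℝ) + 1)),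
      {x | ENNReal.ofReal (r ^ (k + 1)) / 2 < volume (Gᶜ ∩ ball x (3 * r))}ᶜ := by
    ext x
    simp only [thick, Set.mem_iInter, Set.mem_setOf_eq, Set.mem_compl_iff, not_lt]
    refine forall₂_congr fun r _ => ?_
    rw [ENNReal.le_div_iff_mul_le (by simp) (by simp), mul_comm, Set.inter_comm, Set.diff_eq]
  rw [this]
  exact isClosed_biInter fun r _ => (isOpen_ball_measure _ _ _ _).isClosed_compl

theorem vol_ball_PP {k : ℕ} (x : PP k) {r : ℝ} (hr : 0 < r) :
    volume (ball x r) = ENNReal.ofReal ((2 * r) ^ (k + 1)) := by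
  rcases x with ⟨a, b⟩
  rw [← ball_prod_same, Measure.volume_eq_prod, Measure.prod_prod, Real.volume_ball,
    Real.volume_pi_ball b hr, ← ENNReal.ofReal_mul (by positivity)]
  simp [pow_succ, mul_comm]

theorem thick_disj {k : ℕ} {G : Set (PP k)} (hG : MeasurableSet G) {i j : ℕ} {x : PP k}
    (h1 : x ∈ thick G i) (h2 : x ∈ thick Gᶜ j) : False := by
  obtain ⟨r, hr, hr'⟩ := exists_between
    (lt_min (Nat.one_div_pos_of_nat (α := ℝ) (n := i)) (Nat.one_div_pos_of_nat (α := ℝ) (n := j)))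
  have a1 := h1 r ⟨hr, hr'.trans_le (min_le_left _ _)⟩
  have a2 := h2 r ⟨hr, hr'.trans_le (min_le_right _ _)⟩
  rw [Set.diff_compl] at a2
  have h3 := measure_inter_add_diff (μ := volume) (ball x (3 * r)) hG
  rw [vol_ball_PP x (by positivity)] at h3
  have h4 : 2 * ENNReal.ofReal ((2 * (3 * r)) ^ (k + 1)) ≤ 2 * ENNReal.ofReal (r ^ (k + 1)) := by
    rw [← h3, mul_add, two_mul (ENNReal.ofReal _)]
    exact add_le_add a2 a1
  rw [ENNReal.mul_le_mul_iff_right (by simp) (by simp), ENNReal.ofReal_le_ofReal_iff (by positivity)] at h4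
  have : r ^ (k + 1) < (2 * (3 * r)) ^ (k + 1) :=
    pow_lt_pow_left₀ (by linarith) hr.le (by simp)
  linarith

theorem ae_thick {k : ℕ} {G : Set (PP k)} (hG : MeasurableSet G) :
    ∀ᵐ x, x ∈ G → ∃ j, x ∈ thick G j := by
  filter_upwards [Besicovitch.ae_tendsto_measure_inter_div_of_measurableSet volume hG.compl]
    with x hx hxG
  rw [Set.indicator_of_notMem (by simpa using hxG)] at hx
  have hpos : (0:ℝ≥0∞) < ENNReal.ofReal ((1 / 6) ^ (k + 1)) / 2 := by
    apply ENNReal.div_pos (by simp) (by simp)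
  have := (hx.eventually (gt_mem_nhds hpos))
  rw [eventually_nhdsWithin_iff, Metric.eventually_nhds_iff] at this
  obtain ⟨ε, hε, h⟩ := this
  obtain ⟨j, hj⟩ := exists_nat_one_div_lt (show 0 < ε / 3 by positivity)
  refine ⟨j, fun r hr => ?_⟩
  have hr0 : 0 < r := hr.1
  have h1 := h (y := 3 * r) (by
    rw [Real.dist_eq, sub_zero, abs_of_pos (by positivity)]; linarith [hr.2]) (by
    show 0 < 3 * r; positivity)
  have hfin : volume (closedBall x (3 * r)) ≠ ∞ := measure_closedBall_lt_top.ne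
  have hvol : volume (closedBall x (3 * r)) = ENNReal.ofReal ((6 * r) ^ (k + 1)) := by
    rcases x with ⟨a, b⟩
    rw [← closedBall_prod_same, Measure.volume_eq_prod, Measure.prod_prod, Real.volume_closedBall,
      Real.volume_pi_closedBall b (by positivity), ← ENNReal.ofReal_mul (by positivity)]
    congr 1
    simp only [Fintype.card_fin]
    ring
  rw [hvol, ENNReal.div_lt_iff (Or.inl (by simp; positivity)) (Or.inl (by simp))] at h1
  have h2 : volume (ball x (3 * r) \ G) ≤ volume (Gᶜ ∩ closedBall x (3 * r)) := by
    apply measure_mono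
    intro y hy
    exact ⟨hy.2, ball_subset_closedBall hy.1⟩
  calc 2 * volume (ball x (3 * r) \ G)
      ≤ 2 * (ENNReal.ofReal ((1 / 6) ^ (k + 1)) / 2 * ENNReal.ofReal ((6 * r) ^ (k + 1))) := by
        gcongr; exact h2.trans h1.le
    _ = ENNReal.ofReal (r ^ (k + 1)) := by
        rw [← mul_assoc, ENNReal.mul_div_cancel (by simp) (by simp),
          ← ENNReal.ofReal_mul (by positivity), ← mul_pow]
        congr 2; ring

theorem null_aux {k : ℕ} {G : Set (PP k)} (hG : MeasurableSet G) (j : ℕ) (σ : ℝ)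
    (hσ : σ = 1 ∨ σ = -1) (s : ℝ) (hs : 0 < s) (S : Set (Fin k → ℝ)) (τ : (Fin k → ℝ) → ℝ)
    (a : ℝ) (hτa : ∀ z ∈ S, τ z ∈ Set.Icc a (a + s / 2))
    (hτ : ∀ z ∈ S, (τ z, z) ∈ thick G j ∧
      ∀ u ∈ Set.Ioo (0:ℝ) s, ∃ i, (τ z + σ * u, z) ∈ thick Gᶜ i) :
    volume S = 0 := by
  have hnull : volume (G ∩ ⋃ i, thick Gᶜ i) = 0 := by
    rw [measure_eq_zero_iff_ae_notMem]
    filter_upwards [ae_thick hG] with x hx hx'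
    obtain ⟨i, hi⟩ := hx hx'.1
    obtain ⟨i', hi'⟩ := Set.mem_iUnion.1 hx'.2
    exact thick_disj hG hi hi'
  have hσ2 : σ * σ = 1 := by rcases hσ with h | h <;> simp [h]
  have hσa : |σ| = 1 := by rcases hσ with h | h <;> simp [h]
  -- sublevel estimate
  have hL : ∀ r, 0 < r → r < s / 2 → r < 1 / ((j:ℝ) + 1) → ∀ z0, ∀ z ∈ S ∩ closedBall z0 r,
      2 * volume {z' ∈ S ∩ closedBall z0 r | σ * τ z' ≤ σ * τ z} ≤ ENNReal.ofReal (r ^ k) := by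
    intro r hr hrs hrj z0 z hz
    set L := {z' ∈ S ∩ closedBall z0 r | σ * τ z' ≤ σ * τ z} with hLdef
    let J : Set ℝ := (fun v => σ * v) ⁻¹' Set.Ioo (σ * τ z) (σ * τ z + r)
    have hJ : volume J = ENNReal.ofReal r := by
      have : volume J = _ := Real.volume_preimage_mul_left (a := σ)
        (by rintro rfl; simp at hσ2) (Set.Ioo (σ * τ z) (σ * τ z + r))
      rw [this, abs_inv, hσa]
      simp
    have hsub : J ×ˢ L ⊆ (ball ((τ z, z) : PP k) (3 * r) \ G) ∪ (G ∩ ⋃ i, thick Gᶜ i) := by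
      rintro ⟨v, z'⟩ ⟨hv, hz', hle⟩
      have hv1 : σ * τ z < σ * v := hv.1
      have hv2 : σ * v < σ * τ z + r := hv.2
      have hmem : (v, z') ∈ ⋃ i, thick Gᶜ i := by
        obtain ⟨i, hi⟩ := (hτ z' hz'.1).2 (σ * v - σ * τ z') ⟨by linarith, by
          have b1 := hτa z hz.1
          have b2 := hτa z' hz'.1
          have : σ * τ z - σ * τ z' ≤ s / 2 := by
            rcases hσ with h | h <;> rw [h] <;> linarith [b1.1, b1.2, b2.1, b2.2]
          linarith⟩
        have he : τ z' + σ * (σ * v - σ * τ z') = v := by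
          linear_combination (v - τ z') * hσ2
        rw [he] at hi
        exact Set.mem_iUnion.2 ⟨i, hi⟩
      by_cases hvG : (v, z') ∈ G
      · exact Or.inr ⟨hvG, hmem⟩
      · refine Or.inl ⟨?_, hvG⟩
        rw [mem_ball, Prod.dist_eq, max_lt_iff]
        constructor
        · rw [Real.dist_eq]
          have : |σ * v - σ * τ z| < 3 * r := by rw [abs_lt]; constructor <;> linarith
          rwa [← mul_sub, abs_mul, hσa, one_mul] at this
        · have d1 := mem_closedBall.1 hz'.2
          have d2 := mem_closedBall'.1 hz.2
          calc dist z' z ≤ dist z' z0 + dist z0 z := dist_triangle _ _ _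
            _ ≤ r + r := by linarith
            _ < 3 * r := by linarith
    have h1 := (hτ z hz.1).1 r ⟨hr, hrj⟩
    have h2 : volume (J ×ˢ L) ≤ volume (ball ((τ z, z) : PP k) (3 * r) \ G) :=
      (measure_mono hsub).trans ((measure_union_le _ _).trans (by rw [hnull, add_zero]))
    rw [Measure.volume_eq_prod, Measure.prod_prod, hJ] at h2
    have h3 : ENNReal.ofReal r * (2 * volume L) ≤ ENNReal.ofReal r * ENNReal.ofReal (r ^ k) := by
      rw [← ENNReal.ofReal_mul hr.le, ← pow_succ', mul_left_comm]
      exact (mul_le_mul_right h2 2).trans h1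
    rwa [ENNReal.mul_le_mul_iff_right (by simpa using hr) (by simp)] at h3
  have hQ : ∀ r, 0 < r → r < s / 2 → r < 1 / ((j:ℝ) + 1) → ∀ z0,
      2 * volume (S ∩ closedBall z0 r) ≤ ENNReal.ofReal (r ^ k) := by
    intro r hr hrs hrj z0
    rcases (S ∩ closedBall z0 r).eq_empty_or_nonempty with he | hne
    · simp [he]
    set V : Set ℝ := (fun z => σ * τ z) '' (S ∩ closedBall z0 r) with hV
    have hVb : BddAbove V := by
      refine ⟨|a| + s, ?_⟩
      rintro _ ⟨z, hz, rfl⟩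
      have b1 := hτa z hz.1
      have := neg_abs_le a
      have := le_abs_self a
      rcases hσ with h | h <;> simp only [h] <;> linarith [b1.1, b1.2]
    by_cases hM : sSup V ∈ V
    · obtain ⟨z, hz, hzM⟩ := hM
      refine le_trans ?_ (hL r hr hrs hrj z0 z hz)
      gcongr
      intro z' hz'
      refine ⟨hz', ?_⟩
      rw [show σ * τ z = sSup V from hzM]
      exact le_csSup hVb ⟨z', hz', rfl⟩
    · obtain ⟨u, hu1, hu2, hu3⟩ := exists_seq_tendsto_sSup (hne.image _) hVb
      have hcov : S ∩ closedBall z0 r =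
          ⋃ m, {z' ∈ S ∩ closedBall z0 r | σ * τ z' ≤ u m} := by
        ext z
        simp only [Set.mem_iUnion]
        constructor
        · intro hz
          have hlt : σ * τ z < sSup V := lt_of_le_of_ne (le_csSup hVb ⟨z, hz, rfl⟩)
            (fun h => hM (h ▸ ⟨z, hz, rfl⟩))
          obtain ⟨m, hm⟩ := (hu2.eventually (lt_mem_nhds hlt)).exists
          exact ⟨m, hz, hm.le⟩
        · rintro ⟨m, hz, _⟩; exact hz
      have hmono : Monotone fun m => {z' ∈ S ∩ closedBall z0 r | σ * τ z' ≤ u m} := by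
        intro p q hpq z hz
        exact ⟨hz.1, hz.2.trans (hu1 hpq)⟩
      rw [hcov, hmono.measure_iUnion, ENNReal.mul_iSup]
      refine iSup_le fun m => ?_
      obtain ⟨z, hz, hzm⟩ := hu3 m
      have := hL r hr hrs hrj z0 z hz
      rwa [show σ * τ z = u m from hzm] at this
  -- density
  have hae := Besicovitch.ae_tendsto_measure_inter_div (volume : Measure (Fin k → ℝ)) S
  have hfalse : ∀ᵐ z ∂(volume.restrict S : Measure (Fin k → ℝ)), False := by
    filter_upwards [hae] with z hz
    have h12 : (2:ℝ≥0∞)⁻¹ < 1 := by simp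
    have h1 := hz.eventually (lt_mem_nhds h12)
    have h2 : ∀ᶠ r in nhdsWithin (0:ℝ) (Set.Ioi 0),
        r ∈ Set.Ioo (0:ℝ) (min (s / 2) (1 / ((j:ℝ) + 1))) :=
      Ioo_mem_nhdsGT (lt_min (by positivity) Nat.one_div_pos_of_nat)
    obtain ⟨r, hr1, hr2⟩ := (h1.and h2).exists
    have hr0 : 0 < r := hr2.1
    have h3 := hQ r hr0 (hr2.2.trans_le (min_le_left _ _)) (hr2.2.trans_le (min_le_right _ _)) z
    have hv : volume (closedBall z r) = ENNReal.ofReal ((2 * r) ^ k) := by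
      rw [Real.volume_pi_closedBall z hr0.le]; simp
    rw [hv, ENNReal.lt_div_iff_mul_lt (Or.inl (by simp; positivity)) (Or.inl (by simp))] at hr1
    have h4 : ENNReal.ofReal ((2 * r) ^ k) < ENNReal.ofReal (r ^ k) := by
      refine lt_of_lt_of_le ?_ h3
      have := ENNReal.mul_lt_mul_right (a := 2) (by simp) (by simp) hr1
      rwa [← mul_assoc, ENNReal.mul_inv_cancel (by simp) (by simp), one_mul] at this
    rw [ENNReal.ofReal_lt_ofReal_iff_of_nonneg (by positivity)] at h4
    have : r ^ k ≤ (2 * r) ^ k := pow_le_pow_left₀ hr0.le (by linarith) k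
    linarith
  have h0 : (volume.restrict S : Measure (Fin k → ℝ)) = 0 := by
    rw [← ae_eq_bot]; exact eventually_false_iff_eq_bot.1 hfalse
  exact Measure.restrict_eq_zero.1 h0

theorem null_lemma {k : ℕ} {G : Set (PP k)} (hG : MeasurableSet G) (j : ℕ) (σ : ℝ)
    (hσ : σ = 1 ∨ σ = -1) (s : ℝ) (hs : 0 < s) :
    volume {z : Fin k → ℝ | ∃ t, (t, z) ∈ thick G j ∧
      ∀ u ∈ Set.Ioo (0:ℝ) s, ∃ i, (t + σ * u, z) ∈ thick Gᶜ i} = 0 := by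
  have hsub : {z : Fin k → ℝ | ∃ t, (t, z) ∈ thick G j ∧
      ∀ u ∈ Set.Ioo (0:ℝ) s, ∃ i, (t + σ * u, z) ∈ thick Gᶜ i} ⊆
      ⋃ q : ℤ, {z : Fin k → ℝ | ∃ t ∈ Set.Icc (q * (s / 2)) (q * (s / 2) + s / 2),
        (t, z) ∈ thick G j ∧ ∀ u ∈ Set.Ioo (0:ℝ) s, ∃ i, (t + σ * u, z) ∈ thick Gᶜ i} := by
    rintro z ⟨t, ht⟩
    refine Set.mem_iUnion.2 ⟨⌊t / (s / 2)⌋, t, ⟨?_, ?_⟩, ht⟩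
    · exact (le_div_iff₀ (by positivity)).1 (Int.floor_le _)
    · have := (Int.lt_floor_add_one (t / (s / 2))).le
      rw [div_le_iff₀ (by positivity)] at this
      linarith
  refine measure_mono_null hsub (measure_iUnion_null fun q => ?_)
  classical
  set S := {z : Fin k → ℝ | ∃ t ∈ Set.Icc (q * (s / 2)) (q * (s / 2) + s / 2),
        (t, z) ∈ thick G j ∧ ∀ u ∈ Set.Ioo (0:ℝ) s, ∃ i, (t + σ * u, z) ∈ thick Gᶜ i} with hS
  have hch : ∀ z, ∃ t : ℝ, z ∈ S → t ∈ Set.Icc (q * (s / 2)) (q * (s / 2) + s / 2) ∧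
        (t, z) ∈ thick G j ∧ ∀ u ∈ Set.Ioo (0:ℝ) s, ∃ i, (t + σ * u, z) ∈ thick Gᶜ i := by
    intro z
    by_cases hz : z ∈ S
    · obtain ⟨t, ht⟩ := hz; exact ⟨t, fun _ => ht⟩
    · exact ⟨0, fun h => absurd h hz⟩
  choose τ hτ using hch
  exact null_aux hG j σ hσ s hs S τ _ (fun z hz => (hτ z hz).1) (fun z hz => (hτ z hz).2)



theorem ae_ae_swap {k : ℕ} {p : PP k → Prop} (h : ∀ᵐ x, p x) :
    ∀ᵐ z : Fin k → ℝ, ∀ᵐ t : ℝ, p (t, z) := by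
  have h1 : ∀ᵐ x : (Fin k → ℝ) × ℝ, p x.swap :=
    (Measure.measurePreserving_swap (μ := (volume : Measure (Fin k → ℝ)))
      (ν := (volume : Measure ℝ))).quasiMeasurePreserving.ae h
  exact Measure.ae_ae_of_ae_prod h1

theorem exceptional {k : ℕ} {G : Set (PP k)} (hG : MeasurableSet G) (σ : ℝ)
    (hσ : σ = 1 ∨ σ = -1) :
    ∀ᵐ z : Fin k → ℝ, ∀ j, ∀ t ∈ {t | (t, z) ∈ thick G j}, ∀ s > 0,
      ¬ ∀ u ∈ Set.Ioo (0:ℝ) s, ∃ i, (t + σ * u, z) ∈ thick Gᶜ i := by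
  have : ∀ j l : ℕ, ∀ᵐ z : Fin k → ℝ, ¬ ∃ t, (t, z) ∈ thick G j ∧
      ∀ u ∈ Set.Ioo (0:ℝ) (1 / ((l:ℝ) + 1)), ∃ i, (t + σ * u, z) ∈ thick Gᶜ i := by
    intro j l
    exact measure_eq_zero_iff_ae_notMem.1
      (null_lemma hG j σ hσ (1 / ((l:ℝ) + 1)) Nat.one_div_pos_of_nat)
  filter_upwards [ae_all_iff.2 fun j => ae_all_iff.2 (this j)] with z hz j t ht s hs h
  obtain ⟨l, hl⟩ := exists_nat_one_div_lt hs
  exact hz j l ⟨t, ht, fun u hu => h u ⟨hu.1, hu.2.trans hl⟩⟩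

theorem slice_thm {k : ℕ} {G : Set (PP k)} (hG : MeasurableSet G) (hfin : volume G ≠ ∞) :
    ∀ᵐ z : Fin k → ℝ, (∀ t, (∃ j, (t, z) ∈ thick G j) ∨ (∃ j, (t, z) ∈ thick Gᶜ j)) →
      ∀ᵐ t : ℝ, (t, z) ∉ G := by
  have hlt : ∀ᵐ z : Fin k → ℝ, volume ((fun t : ℝ => (t, z)) ⁻¹' G) < ∞ := by
    apply ae_lt_top (measurable_measure_prodMk_right hG)
    rw [← Measure.prod_apply_symm hG]
    exact hfin
  filter_upwards [exceptional hG 1 (Or.inl rfl), exceptional hG (-1) (Or.inr rfl),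
    exceptional hG.compl 1 (Or.inl rfl), exceptional hG.compl (-1) (Or.inr rfl), hlt,
    ae_ae_swap (ae_thick hG), ae_ae_swap (ae_thick hG.compl)] with z h1 h2 h3 h4 h5 h6 h7 hcov
  simp only [compl_compl, one_mul, neg_mul] at h1 h2 h3 h4
  rcases line_lemma (fun j => {t | (t, z) ∈ thick G j}) (fun j => {t | (t, z) ∈ thick Gᶜ j})
    (fun j => (thick_closed G j).preimage (by fun_prop))
    (fun j => (thick_closed Gᶜ j).preimage (by fun_prop)) hcov
    (fun i j t ht ht' => thick_disj hG ht ht') h1 h2 h3 h4 with h | h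
  · exfalso
    have : ∀ᵐ t : ℝ, t ∈ (fun t : ℝ => (t, z)) ⁻¹' G := by
      filter_upwards [h7] with t ht
      by_contra hc
      obtain ⟨j, hj⟩ := ht hc
      obtain ⟨i, hi⟩ := h t
      exact thick_disj hG hi hj
    have h8 : volume ((fun t : ℝ => (t, z)) ⁻¹' G) = volume (Set.univ : Set ℝ) :=
      measure_congr (eventuallyEq_univ.2 this)
    rw [h8] at h5
    simp at h5
  · filter_upwards [h6] with t ht hc
    obtain ⟨j, hj⟩ := ht hc
    obtain ⟨i, hi⟩ := h t
    exact thick_disj hG hj hi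

def eqv {k : ℕ} (i : Fin (k + 1)) : XX (k + 1) ≃ᵐ PP k :=
  (MeasurableEquiv.toLp 2 (Fin (k + 1) → ℝ)).symm.trans
    (MeasurableEquiv.piFinSuccAbove (fun _ => ℝ) i)

theorem eqv_apply {k : ℕ} (i : Fin (k + 1)) (x : XX (k + 1)) :
    eqv i x = (x i, fun j => x (i.succAbove j)) := rfl

theorem eqv_mp {k : ℕ} (i : Fin (k + 1)) :
    MeasurePreserving (eqv i) (volume : Measure (XX (k + 1))) volume :=
  (volume_preserving_piFinSuccAbove (fun _ => ℝ) i).comp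
    (PiLp.volume_preserving_ofLp (Fin (k + 1)))

theorem eqv_dist {k : ℕ} : ∃ K : ℝ, 0 < K ∧ ∀ (i : Fin (k + 1)) (x y : XX (k + 1)),
    dist x y ≤ K * dist (eqv i x) (eqv i y) := by
  have h := PiLp.antilipschitzWith_ofLp 2 (fun _ : Fin (k + 1) => ℝ)
  refine ⟨((Fintype.card (Fin (k + 1)) : NNReal) ^ (1 / (2:ℝ≥0∞)).toReal : NNReal) + 1,
    by positivity, fun i x y => ?_⟩
  have h1 := h.le_mul_dist x y
  have h2 : dist (WithLp.ofLp x) (WithLp.ofLp y) = dist (eqv i x) (eqv i y) := by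
    have := Fin.dist_insertNth_insertNth (α := fun _ => ℝ) (i := i) (x i) (y i)
      (fun j => x (i.succAbove j)) (fun j => y (i.succAbove j))
    rw [eqv_apply, eqv_apply, Prod.dist_eq, ← this]
    congr 1
    · exact (Fin.insertNth_self_removeNth i (WithLp.ofLp x)).symm
    · exact (Fin.insertNth_self_removeNth i (WithLp.ofLp y)).symm
  rw [h2] at h1
  have := dist_nonneg (x := eqv i x) (y := eqv i y)
  nlinarith

theorem thick_of_density {k : ℕ} (i : Fin (k + 1)) {G : Set (XX (k + 1))} (hG : MeasurableSet G)
    {x : XX (k + 1)} (h : HasDensity G x 1) : ∃ j, eqv i x ∈ thick ((eqv i).symm ⁻¹' G) j := by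
  rw [hasDensity_one_iff hG] at h
  obtain ⟨K, hK, hd⟩ := eqv_dist (k := k)
  set ω := (volume (ball (0 : XX (k + 1)) 1)).toReal with hω
  have hω0 : 0 < ω := vol_ball_pos _ one_pos
  have hpos : 0 < 1 / (2 * ω * (3 * K) ^ (k + 1)) := by positivity
  have h' := h.eventually (gt_mem_nhds hpos)
  rw [eventually_nhdsWithin_iff, Metric.eventually_nhds_iff] at h'
  obtain ⟨ε, hε, h'⟩ := h'
  obtain ⟨j, hj⟩ := exists_nat_one_div_lt (show 0 < ε / (3 * K) by positivity)
  refine ⟨j, fun r hr => ?_⟩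
  have hr0 : 0 < r := hr.1
  have hrr : 0 < 3 * K * r := by positivity
  have h1 := h' (y := 3 * K * r) (by
    rw [Real.dist_eq, sub_zero, abs_of_pos hrr]
    have := hr.2.trans hj
    rw [lt_div_iff₀ (by positivity)] at this; linarith) hrr
  have hvol : (volume (ball x (3 * K * r))).toReal = (3 * K * r) ^ (k + 1) * ω := by
    rw [Measure.addHaar_ball volume x hrr.le, ENNReal.toReal_mul,
      ENNReal.toReal_ofReal (by positivity)]
    simp [hω]
  rw [hvol, div_lt_div_iff₀ (by positivity) (by positivity)] at h1
  have h2 : volume (ball (eqv i x) (3 * r) \ (eqv i).symm ⁻¹' G) ≤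
      volume (Gᶜ ∩ ball x (3 * K * r)) := by
    rw [← (eqv_mp i).measure_preimage_equiv]
    apply measure_mono
    intro y hy
    have hy2 : y ∉ G := by
      have := hy.2
      simpa using this
    refine ⟨hy2, ?_⟩
    have hy1 : dist (eqv i y) (eqv i x) < 3 * r := hy.1
    rw [mem_ball]
    calc dist y x ≤ K * dist (eqv i y) (eqv i x) := hd i y x
      _ < K * (3 * r) := by gcongr
      _ = 3 * K * r := by ring
  calc 2 * volume (ball (eqv i x) (3 * r) \ (eqv i).symm ⁻¹' G)
      ≤ 2 * volume (Gᶜ ∩ ball x (3 * K * r)) := by gcongr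
    _ = ENNReal.ofReal (2 * (volume (Gᶜ ∩ ball x (3 * K * r))).toReal) := by
        rw [ENNReal.ofReal_mul (by simp), ENNReal.ofReal_toReal (vol_inter_ne_top _ _ _)]; simp
    _ ≤ ENNReal.ofReal (r ^ (k + 1)) := by
        apply ENNReal.ofReal_le_ofReal
        have hc : 0 < ω * (3 * K) ^ (k + 1) := by positivity
        rw [mul_pow (3 * K) r] at h1
        have h3 : (2 * (volume (Gᶜ ∩ ball x (3 * K * r))).toReal) * (ω * (3 * K) ^ (k + 1)) ≤
          r ^ (k + 1) * (ω * (3 * K) ^ (k + 1)) := by nlinarith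
        exact le_of_mul_le_mul_right h3 hc

theorem proj_thm {k : ℕ} {G : Set (XX (k + 1))} (hG : MeasurableSet G) (hfin : volume G ≠ ∞)
    (i : Fin (k + 1)) : ∃ T : Set (Fin k → ℝ), MeasurableSet T ∧ volume T ≤ perimeter G ∧
      ∀ᵐ x : XX (k + 1), x ∈ G → (fun j => x (i.succAbove j)) ∈ T := by
  let π : XX (k + 1) → (Fin k → ℝ) := fun x j => x (i.succAbove j)
  have hπ : LipschitzWith 1 π := by
    apply LipschitzWith.of_dist_le_mul
    intro x y
    rw [NNReal.coe_one, one_mul]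
    have h1 := (PiLp.lipschitzWith_ofLp 2 (fun _ : Fin (k + 1) => ℝ)).dist_le_mul x y
    rw [NNReal.coe_one, one_mul] at h1
    refine le_trans ?_ h1
    rw [dist_pi_le_iff dist_nonneg]
    intro j
    exact dist_le_pi_dist (WithLp.ofLp x) (WithLp.ofLp y) (i.succAbove j)
  refine ⟨toMeasurable volume (π '' essBoundary G), measurableSet_toMeasurable _ _, ?_, ?_⟩
  · rw [measure_toMeasurable]
    have h1 := hπ.hausdorffMeasure_image_le (d := (k:ℝ)) (by positivity) (essBoundary G)
    have h2 : (μH[(k:ℝ)] : Measure (Fin k → ℝ)) = volume := by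
      have := hausdorffMeasure_pi_real (ι := Fin k)
      rwa [Fintype.card_fin] at this
    rw [h2] at h1
    unfold perimeter
    have : ((k + 1 : ℕ) : ℝ) - 1 = k := by push_cast; ring
    rw [this]
    simpa using h1
  · have hG' : MeasurableSet ((eqv i).symm ⁻¹' G) := (eqv i).symm.measurable hG
    have hfin' : volume ((eqv i).symm ⁻¹' G) ≠ ∞ := by
      rw [(eqv_mp i).symm.measure_preimage_equiv]; exact hfin
    set T := toMeasurable volume (π '' essBoundary G) with hT
    have key : ∀ᵐ z : Fin k → ℝ, ∀ᵐ t : ℝ, z ∉ T → (t, z) ∉ (eqv i).symm ⁻¹' G := by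
      filter_upwards [slice_thm hG' hfin'] with z hz
      by_cases hzT : z ∈ T
      · exact Eventually.of_forall fun t h => absurd hzT h
      · have hh := hz (by
          intro t
          obtain ⟨x, hx⟩ := (eqv i).surjective (t, z)
          have hxn : x ∉ essBoundary G := by
            intro hxe
            apply hzT
            apply subset_toMeasurable
            refine ⟨x, hxe, ?_⟩
            rw [eqv_apply] at hx
            exact (Prod.ext_iff.1 hx).2
          rw [← hx]
          simp only [essBoundary, Set.mem_setOf_eq, not_and_or, not_not] at hxn
          rcases hxn with h | h
          · right
            rw [hasDensity_zero_iff hG] at h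
            exact thick_of_density i hG.compl h
          · left
            exact thick_of_density i hG h)
        filter_upwards [hh] with t ht _
        exact ht
    have hswap : ∀ᵐ q : (Fin k → ℝ) × ℝ, q.1 ∉ T → (q.2, q.1) ∉ (eqv i).symm ⁻¹' G := by
      rw [Measure.volume_eq_prod, Measure.ae_prod_iff_ae_ae]
      · exact key
      · have m1 : MeasurableSet {q : (Fin k → ℝ) × ℝ | q.1 ∈ T} :=
          measurable_fst (measurableSet_toMeasurable _ _)
        have m2 : MeasurableSet {q : (Fin k → ℝ) × ℝ | (q.2, q.1) ∈ (eqv i).symm ⁻¹' G} :=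
          measurable_swap hG'
        exact m1.compl.imp m2.compl
    have h2 : ∀ᵐ q : PP k, q.2 ∉ T → q ∉ (eqv i).symm ⁻¹' G :=
      (Measure.measurePreserving_swap (μ := (volume : Measure ℝ))
        (ν := (volume : Measure (Fin k → ℝ)))).quasiMeasurePreserving.ae hswap
    have h3 := (eqv_mp i).quasiMeasurePreserving.ae h2
    filter_upwards [h3] with x hx hxG
    by_contra hc
    exact hx hc (by simpa using hxG)


theorem iso_zero {G : Set (XX 1)} (hG : MeasurableSet G) (hfin : volume G ≠ ∞)
    (h0 : volume G ≠ 0) : 1 ≤ perimeter G := by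
  obtain ⟨T, hT, hTP, hae⟩ := proj_thm (k := 0) hG hfin 0
  refine le_trans ?_ hTP
  have hne : ∃ x, x ∈ G ∧ (fun j => x ((0 : Fin 1).succAbove j)) ∈ T := by
    by_contra hc
    push Not at hc
    apply h0
    rw [measure_eq_zero_iff_ae_notMem]
    filter_upwards [hae] with x hx hxG
    exact hc x hxG (hx hxG)
  obtain ⟨x, -, hx⟩ := hne
  have : T = Set.univ := by
    ext y
    simp only [Set.mem_univ, iff_true]
    rwa [Subsingleton.elim y]
  rw [this, Measure.volume_pi_eq_dirac (x := fun j => Fin.elim0 j)]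
  simp

theorem iso_aux {k : ℕ} (hk : 1 ≤ k) {G : Set (Fin (k+1) → ℝ)}
    (hG : MeasurableSet G) (P : ℝ≥0∞) (T : Fin (k+1) → Set (Fin k → ℝ))
    (hT : ∀ i, MeasurableSet (T i)) (hTP : ∀ i, volume (T i) ≤ P)
    (hae : ∀ i, ∀ᵐ x, x ∈ G → (fun j => x (i.succAbove j)) ∈ T i) :
    volume G ≤ ((k+1) * P) ^ (((k:ℝ)+1)/k) := by
  have hk' : (0:ℝ) < k := by exact_mod_cast hk
  set φ : Fin (k+1) → (Fin (k+1) → ℝ) → ℝ≥0∞ := fun i x =>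
    (Set.Icc (0:ℝ) 1).indicator 1 (x i) * (T i).indicator 1 (fun j => x (i.succAbove j)) with hφ
  have hm : ∀ i, Measurable (φ i) := by
    intro i
    apply Measurable.mul
    · exact (measurable_one.indicator measurableSet_Icc).comp (measurable_pi_apply i)
    · exact (measurable_one.indicator (hT i)).comp (measurable_pi_lambda _ fun j => measurable_pi_apply _)
  have hphiInt : ∀ i, ∫⁻ x, φ i x = volume (T i) := by
    intro i
    have := (volume_preserving_piFinSuccAbove (fun _ : Fin (k+1) => ℝ) i).lintegral_comp
      (f := fun q : ℝ × (Fin k → ℝ) => (Set.Icc (0:ℝ) 1).indicator 1 q.1 * (T i).indicator 1 q.2)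
      (by
        apply Measurable.mul
        · exact (measurable_one.indicator measurableSet_Icc).comp measurable_fst
        · exact (measurable_one.indicator (hT i)).comp measurable_snd)
    have e : ∫⁻ x, φ i x = ∫⁻ q : ℝ × (Fin k → ℝ), (Set.Icc (0:ℝ) 1).indicator 1 q.1 * (T i).indicator 1 q.2 := by
      rw [← this]
      rfl
    rw [e, Measure.volume_eq_prod, lintegral_prod_mul]
    · rw [lintegral_indicator_one measurableSet_Icc, lintegral_indicator_one (hT i)]
      simp
    · exact (measurable_one.indicator measurableSet_Icc).aemeasurable
    · exact (measurable_one.indicator (hT i)).aemeasurable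
  have hc : Real.HolderConjugate (Fintype.card (Fin (k+1))) (((k:ℝ)+1)/k) := by
    rw [Real.holderConjugate_iff]
    simp
    refine ⟨by omega, ?_⟩
    field_simp
    ring
  have hf : Measurable (fun x => ∑ i, φ i x) := Finset.measurable_sum _ fun i _ => hm i
  have main := lintegral_prod_lintegral_pow_le (fun _ : Fin (k+1) => (volume : Measure ℝ)) hc hf
  have h1 : volume G ≤ ∫⁻ x, ∏ i, (∫⁻ xᵢ, (∑ j, φ j (Function.update x i xᵢ))) ^
      ((1 : ℝ) / (Fintype.card (Fin (k+1)) - 1 : ℝ)) ∂(Measure.pi fun _ : Fin (k+1) => (volume : Measure ℝ)) := by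
    rw [← lintegral_indicator_one hG]
    apply lintegral_mono_ae
    have : ∀ᵐ x, ∀ i, x ∈ G → (fun j => x (i.succAbove j)) ∈ T i := ae_all_iff.2 hae
    filter_upwards [this] with x hx
    by_cases hxG : x ∈ G
    · rw [Set.indicator_of_mem hxG]
      have : ∀ i, (1:ℝ≥0∞) ≤ (∫⁻ xᵢ, (∑ j, φ j (Function.update x i xᵢ))) ^
      ((1 : ℝ) / (Fintype.card (Fin (k+1)) - 1 : ℝ)) := by
        intro i
        apply ENNReal.one_le_rpow
        · calc (1:ℝ≥0∞) = ∫⁻ t : ℝ, (Set.Icc (0:ℝ) 1).indicator 1 t := by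
                rw [lintegral_indicator_one measurableSet_Icc]; simp
            _ ≤ _ := by
                apply lintegral_mono
                intro t
                refine le_trans ?_ (Finset.single_le_sum (f := fun j => φ j (Function.update x i t)) (fun _ _ => zero_le) (Finset.mem_univ i))
                simp only [hφ]
                simp [Function.update_self, Fin.succAbove_ne, hx i hxG]
        · simp
          omega
      calc (1 : (Fin (k+1) → ℝ) → ℝ≥0∞) x = ∏ i : Fin (k+1), 1 := by simp
        _ ≤ _ := Finset.prod_le_prod' fun i _ => this i
    · rw [Set.indicator_of_notMem hxG]
      exact zero_le
  refine h1.trans (main.trans ?_)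
  apply ENNReal.rpow_le_rpow _ (by positivity)
  rw [lintegral_finsetSum _ fun i _ => hm i]
  calc ∑ i, ∫⁻ x, φ i x ∂(Measure.pi fun _ : Fin (k+1) => (volume : Measure ℝ)) ≤ ∑ i : Fin (k+1), P := by
        apply Finset.sum_le_sum
        intro i _
        exact (hphiInt i).le.trans (hTP i)
    _ = _ := by simp

theorem iso' {k : ℕ} {G : Set (XX (k+1))} (hG : MeasurableSet G) (hfin : volume G ≠ ∞)
    (h0 : volume G ≠ 0) :
    volume G ^ ((k:ℝ)/(k+1)) ≤ (k+1) * perimeter G := by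
  rcases Nat.eq_zero_or_pos k with rfl | hk
  · simpa using iso_zero hG hfin h0
  have hk' : (0:ℝ) < k := by exact_mod_cast hk
  choose T hT hTP hae using fun i => proj_thm hG hfin i
  have mp := (EuclideanSpace.volume_preserving_symm_measurableEquiv_toLp (Fin (k+1))).symm
  have mp' := EuclideanSpace.volume_preserving_symm_measurableEquiv_toLp (Fin (k+1))
  have hG' : MeasurableSet ((WithLp.toLp 2 : (Fin (k+1) → ℝ) → XX (k+1)) ⁻¹' G) :=
    mp.measurable hG
  have := iso_aux hk hG' (perimeter G) T hT hTP (fun i => mp.quasiMeasurePreserving.ae (hae i))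
  have e : volume ((WithLp.toLp 2 : (Fin (k+1) → ℝ) → XX (k+1)) ⁻¹' G) = volume G :=
    mp.measure_preimage hG.nullMeasurableSet
  rw [e] at this
  calc volume G ^ ((k:ℝ)/(k+1)) ≤ (((k+1) * perimeter G) ^ (((k:ℝ)+1)/k)) ^ ((k:ℝ)/(k+1)) := by
        gcongr
    _ = _ := by
        rw [← ENNReal.rpow_mul]
        have : ((k:ℝ)+1)/k * ((k:ℝ)/(k+1)) = 1 := by field_simp
        rw [this, ENNReal.rpow_one]

theorem iso {n : ℕ} (hn : 1 ≤ n) {G : Set (XX n)} (hG : MeasurableSet G) (hfin : volume G ≠ ∞)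
    (h0 : volume G ≠ 0) :
    volume G ^ (((n:ℝ)-1)/n) ≤ n * perimeter G := by
  obtain ⟨k, rfl⟩ : ∃ k, n = k+1 := ⟨n-1, by omega⟩
  have := iso' hG hfin h0
  push_cast
  simpa using this


theorem hmeas_cover {X : Type*} [MetricSpace X] [MeasurableSpace X] [BorelSpace X] (d : ℝ)
    (s : Set X) (hs : μH[d] s ≠ ∞) (r : ℝ≥0∞) (hr : 0 < r) (e : ℝ≥0∞) (he : e ≠ 0) :
    ∃ t : ℕ → Set X, s ⊆ ⋃ n, t n ∧ (∀ n, ediam (t n) ≤ r) ∧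
      ∑' n, ⨆ _ : (t n).Nonempty, ediam (t n) ^ d ≤ μH[d] s + e := by
  have h1 : (⨅ (t : ℕ → Set X) (_ : s ⊆ ⋃ n, t n) (_ : ∀ n, ediam (t n) ≤ r),
          ∑' n, ⨆ _ : (t n).Nonempty, ediam (t n) ^ d) < μH[d] s + e := by
    refine lt_of_le_of_lt ?_ (ENNReal.lt_add_right hs he)
    rw [Measure.hausdorffMeasure_apply]
    exact le_iSup₂ (f := fun (r : ℝ≥0∞) (_ : 0 < r) => ⨅ (t : ℕ → Set X) (_ : s ⊆ ⋃ n, t n) (_ : ∀ n, ediam (t n) ≤ r),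
          ∑' n, ⨆ _ : (t n).Nonempty, ediam (t n) ^ d) r hr
  simp only [iInf_lt_iff] at h1
  obtain ⟨t, h1, h2, h3⟩ := h1
  exact ⟨t, h1, h2, h3.le⟩

theorem eilenberg {X : Type*} [MetricSpace X] [MeasurableSpace X] [BorelSpace X]
    {f : X → ℝ} (hf : LipschitzWith 1 f) {d : ℝ} (hd : 0 ≤ d) (A : Set X) :
    ∫⁻ t, μH[d] (A ∩ f ⁻¹' {t}) ≤ μH[d+1] A := by
  by_cases hA : μH[d+1] A = ∞
  · rw [hA]; exact le_top
  choose S hS1 hS2 hS3 using fun k : ℕ => hmeas_cover (d+1) A hA ((k:ℝ≥0∞)+1)⁻¹ (by simp) ((k:ℝ≥0∞)+1)⁻¹ (by simp)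
  set g : ℕ → ℝ → ℝ≥0∞ := fun k t =>
    ∑' i, (toMeasurable volume (f '' (S k i))).indicator (fun _ => ediam (S k i) ^ d) t with hg
  have hgm : ∀ k, Measurable (g k) := fun k =>
    Measurable.tsum fun i => measurable_const.indicator (measurableSet_toMeasurable _ _)
  have lim0 : Tendsto (fun k : ℕ => ((k:ℝ≥0∞)+1)⁻¹) atTop (nhds 0) := by
    have := (tendsto_add_atTop_iff_nat 1).2 ENNReal.tendsto_inv_nat_nhds_zero
    simpa using this
  have h1 : ∀ t, μH[d] (A ∩ f ⁻¹' {t}) ≤ liminf (fun k => g k t) atTop := by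
    intro t
    refine (Measure.hausdorffMeasure_le_liminf_tsum (β := ℕ)
      (ι := fun k => {i : ℕ // (S k i ∩ f ⁻¹' {t}).Nonempty}) d _ (fun k : ℕ => ((k:ℝ≥0∞)+1)⁻¹) lim0
      (fun k i => S k i) (Eventually.of_forall fun k i => hS2 k i) (Eventually.of_forall fun k => ?_)).trans ?_
    · rintro x ⟨hx, hxt⟩
      obtain ⟨i, hi⟩ := Set.mem_iUnion.1 (hS1 k hx)
      exact Set.mem_iUnion.2 ⟨⟨i, x, hi, hxt⟩, hi⟩
    · apply liminf_le_liminf (Eventually.of_forall fun k => ?_)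
      have := tsum_subtype {i : ℕ | (S k i ∩ f ⁻¹' {t}).Nonempty} (fun i => ediam (S k i) ^ d)
      refine (le_of_eq this).trans ?_
      apply ENNReal.tsum_le_tsum
      intro i
      by_cases hi : (S k i ∩ f ⁻¹' {t}).Nonempty
      · rw [Set.indicator_of_mem (by exact hi), Set.indicator_of_mem]
        obtain ⟨x, hx, hxt⟩ := hi
        exact subset_toMeasurable _ _ ⟨x, hx, hxt⟩
      · rw [Set.indicator_of_notMem (by exact hi)]
        exact zero_le
  calc ∫⁻ t, μH[d] (A ∩ f ⁻¹' {t}) ≤ ∫⁻ t, liminf (fun k => g k t) atTop := lintegral_mono h1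
    _ ≤ liminf (fun k => ∫⁻ t, g k t) atTop := lintegral_liminf_le hgm
    _ ≤ liminf (fun k : ℕ => μH[d+1] A + ((k:ℝ≥0∞)+1)⁻¹) atTop := by
        apply liminf_le_liminf (Eventually.of_forall fun k => ?_)
        refine le_trans ?_ (hS3 k)
        simp only [hg]
        rw [lintegral_tsum fun i => (measurable_const.indicator (measurableSet_toMeasurable _ _)).aemeasurable]
        apply ENNReal.tsum_le_tsum
        intro i
        rw [lintegral_indicator_const (measurableSet_toMeasurable _ _), measure_toMeasurable]
        rcases Set.eq_empty_or_nonempty (S k i) with he | hne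
        · simp [he]
        · rw [ciSup_pos hne]
          have hv : volume (f '' S k i) ≤ ediam (S k i) := by
            refine (Real.volume_le_diam _).trans ?_
            simpa using hf.ediam_image_le (S k i)
          have hfin : ediam (S k i) ≠ ∞ := ne_top_of_le_ne_top (by simp) (hS2 k i)
          by_cases h0 : ediam (S k i) = 0
          · rw [h0] at hv
            rw [le_antisymm hv zero_le]
            simp
          · rw [ENNReal.rpow_add _ _ h0 hfin, ENNReal.rpow_one]
            gcongr
    _ = μH[d+1] A := by
        apply Tendsto.liminf_eq
        simpa using tendsto_const_nhds.add lim0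

def Cn (n : ℕ) : ℝ≥0∞ := (((Fintype.card (Fin n) : NNReal) ^ (1 / (2:ℝ≥0∞)).toReal : NNReal) : ℝ≥0∞) ^ (n:ℝ)

theorem Cn_ne_top (n : ℕ) : Cn n ≠ ∞ := by
  unfold Cn
  apply ENNReal.rpow_ne_top_of_nonneg (by positivity)
  simp

theorem hmeas_le_vol {n : ℕ} (S : Set (XX n)) : μH[(n:ℝ)] S ≤ Cn n * volume S := by
  have hl := PiLp.lipschitzWith_toLp 2 (fun _ : Fin n => ℝ)
  have mp := (EuclideanSpace.volume_preserving_symm_measurableEquiv_toLp (Fin n)).symm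
  have h := hl.hausdorffMeasure_image_le (d := (n:ℝ)) (by positivity) ((WithLp.toLp 2 : (Fin n → ℝ) → XX n) ⁻¹' S)
  have e : (WithLp.toLp 2 : (Fin n → ℝ) → XX n) '' ((WithLp.toLp 2 : (Fin n → ℝ) → XX n) ⁻¹' S) = S :=
    Set.image_preimage_eq _ (WithLp.toLp_surjective 2)
  rw [e] at h
  have h2 : (μH[(n:ℝ)] : Measure (Fin n → ℝ)) = volume := by
    have := @hausdorffMeasure_pi_real (Fin n) _
    simpa using this
  rw [h2] at h
  have h3 : volume ((WithLp.toLp 2 : (Fin n → ℝ) → XX n) ⁻¹' S) = volume S :=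
    mp.measure_preimage_equiv S
  rw [h3] at h
  exact h

theorem coarea {n : ℕ} (hn : 1 ≤ n) (S : Set (XX n)) :
    ∫⁻ t, μH[(n:ℝ)-1] (S ∩ (fun x => ‖x‖) ⁻¹' {t}) ≤ Cn n * volume S := by
  have hn' : (1:ℝ) ≤ n := by exact_mod_cast hn
  have := eilenberg (X := XX n) (f := fun x => ‖x‖) lipschitzWith_one_norm (d := (n:ℝ)-1) (by linarith) S
  refine this.trans ?_
  rw [sub_add_cancel]
  exact hmeas_le_vol S

theorem sphere_finite {n : ℕ} (hn : 1 ≤ n) : μH[(n:ℝ)-1] (sphere (0:XX n) 1) ≠ ∞ := by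
  have hn' : (1:ℝ) ≤ n := by exact_mod_cast hn
  obtain ⟨t, ht, hfin⟩ : ∃ t ∈ Set.Ioo (1:ℝ) 2, μH[(n:ℝ)-1] (sphere (0:XX n) t) ≠ ∞ := by
    by_contra hc
    push Not at hc
    have h := coarea hn (ball (0:XX n) 2)
    have h2 : ∫⁻ t in Set.Ioo (1:ℝ) 2, (∞:ℝ≥0∞) ≤ ∫⁻ t, μH[(n:ℝ)-1] (ball (0:XX n) 2 ∩ (fun x => ‖x‖) ⁻¹' {t}) := by
      rw [← lintegral_indicator measurableSet_Ioo]
      apply lintegral_mono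
      intro t
      by_cases ht : t ∈ Set.Ioo (1:ℝ) 2
      · have : ball (0:XX n) 2 ∩ (fun x => ‖x‖) ⁻¹' {t} = sphere 0 t := by
          ext x
          simp only [Set.mem_inter_iff, mem_ball_zero_iff, Set.mem_preimage, Set.mem_singleton_iff,
            mem_sphere_zero_iff_norm]
          exact ⟨fun h => h.2, fun h => ⟨h ▸ ht.2, h⟩⟩
        rw [Set.indicator_of_mem ht]
        simp only [this, hc t ht, le_refl]
      · rw [Set.indicator_of_notMem ht]; exact zero_le
    have h3 : ∫⁻ t in Set.Ioo (1:ℝ) 2, (∞:ℝ≥0∞) = ∞ := by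
      rw [setLIntegral_const, Real.volume_Ioo]
      norm_num
    rw [h3, top_le_iff] at h2
    rw [h2, top_le_iff] at h
    exact ENNReal.mul_ne_top (Cn_ne_top n) measure_ball_lt_top.ne h
  have ht0 : 0 < t := by linarith [ht.1]
  have e : sphere (0:XX n) 1 = t⁻¹ • sphere (0:XX n) t := by
    rw [smul_sphere' (inv_ne_zero ht0.ne')]
    simp [abs_of_pos ht0, ht0.ne']
  rw [e, Measure.hausdorffMeasure_smul₀ (by linarith) (inv_ne_zero ht0.ne')]
  exact ENNReal.mul_ne_top (by simp) hfin

theorem essBoundary_empty {n : ℕ} : essBoundary (∅ : Set (XX n)) = ∅ := by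
  ext x
  simp only [essBoundary, Set.mem_setOf_eq, Set.mem_empty_iff_false, iff_false, not_and_or, not_not]
  left
  exact hasDensity_zero_of_null (ρ := 1) one_pos (by simp)

theorem perimeter_ball_ne_top {n : ℕ} (hn : 1 ≤ n) : perimeter (ball (0:XX n) 1) ≠ ∞ := by
  refine ne_top_of_le_ne_top (sphere_finite hn) ?_
  apply measure_mono
  have := essBoundary_union_subset (F := (∅ : Set (XX n))) (D := ball 0 1) MeasurableSet.empty measurableSet_ball
  rw [Set.empty_union, essBoundary_empty] at this
  refine this.trans ?_
  rintro x (h | h)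
  · exact h.1.elim
  · exact frontier_ball_subset_sphere h.1


theorem step_perim {n : ℕ} {G D : Set (XX n)} (hG : MeasurableSet G) (hD : MeasurableSet D)
    (hP : perimeter G ≠ ∞) (hle : perimeter G ≤ perimeter (G ∪ D)) :
    perimeter (D \ G) ≤ 2 * μH[(n:ℝ)-1] (frontier D \ {x | HasDensity G x 1}) := by
  set a := μH[(n:ℝ)-1] (frontier D \ {x | HasDensity G x 1}) with ha
  have h1 : perimeter (G ∪ D) ≤ μH[(n:ℝ)-1] (essBoundary G \ closure D) + a :=
    (measure_mono (essBoundary_union_subset hG hD)).trans (measure_union_le _ _)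
  have h2 : perimeter G = μH[(n:ℝ)-1] (essBoundary G ∩ closure D) + μH[(n:ℝ)-1] (essBoundary G \ closure D) :=
    (measure_inter_add_sdiff _ isClosed_closure.measurableSet).symm
  have h3 : μH[(n:ℝ)-1] (essBoundary G \ closure D) ≠ ∞ := by
    intro h
    rw [h] at h2
    exact hP (by rw [h2]; simp)
  have h4 : μH[(n:ℝ)-1] (essBoundary G ∩ closure D) ≤ a := by
    have : μH[(n:ℝ)-1] (essBoundary G ∩ closure D) + μH[(n:ℝ)-1] (essBoundary G \ closure D)
        ≤ a + μH[(n:ℝ)-1] (essBoundary G \ closure D) := by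
      rw [← h2, add_comm a]
      exact hle.trans h1
    exact (ENNReal.add_le_add_iff_right h3).1 this
  calc perimeter (D \ G) ≤ μH[(n:ℝ)-1] (essBoundary G ∩ closure D) + a :=
        (measure_mono (essBoundary_diff_subset hG hD)).trans (measure_union_le _ _)
    _ ≤ a + a := by gcongr
    _ = 2 * a := by rw [two_mul]

theorem ode_step {n : ℕ} (hn : 1 ≤ n) {G D0 D1 : Set (XX n)} {D : ℝ → Set (XX n)} {a b : ℝ}
    (hG : MeasurableSet G) (hD : ∀ r, MeasurableSet (D r)) (hP : perimeter G ≠ ∞)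
    (hfr : ∀ r ∈ Set.Ioo a b, frontier (D r) ⊆ sphere 0 r)
    (hfr1 : ∀ r ∈ Set.Ioo a b, sphere (0:XX n) r ⊆ D1)
    (h0 : ∀ r ∈ Set.Ioo a b, D0 ⊆ D r) (h1 : ∀ r ∈ Set.Ioo a b, D r ⊆ D1)
    (hpos : volume (D0 \ G) ≠ 0) (hfin : volume (D1 \ G) ≠ ∞)
    (hle : ∀ r ∈ Set.Ioo a b, volume (D r \ G) ≠ 0 → perimeter G ≤ perimeter (G ∪ D r)) :
    ENNReal.ofReal (b - a) * volume (D0 \ G) ^ (((n:ℝ)-1)/n) ≤ (2 * n * Cn n) * volume (D1 \ G) := by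
  haveI : NeZero n := ⟨by omega⟩
  have hn' : (1:ℝ) ≤ n := by exact_mod_cast hn
  set A := D1 \ {x | HasDensity G x 1}
  have hA : volume A ≤ volume (D1 \ G) := by
    apply measure_mono_ae
    filter_upwards [ae_hasDensity hG] with x hx hxA
    exact ⟨hxA.1, fun h => hxA.2 (hx h)⟩
  have hpt : ∀ r ∈ Set.Ioo a b, volume (D0 \ G) ^ (((n:ℝ)-1)/n) ≤
      (2 * n) * μH[(n:ℝ)-1] (A ∩ (fun x => ‖x‖) ⁻¹' {r}) := by
    intro r hr
    have hm0 : volume (D0 \ G) ≤ volume (D r \ G) := measure_mono (Set.diff_subset_diff_left (h0 r hr))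
    have hm1 : volume (D r \ G) ≤ volume (D1 \ G) := measure_mono (Set.diff_subset_diff_left (h1 r hr))
    have hp : volume (D r \ G) ≠ 0 := fun h => hpos (le_antisymm (hm0.trans h.le) zero_le)
    have i := iso hn ((hD r).diff hG) (ne_top_of_le_ne_top hfin hm1) hp
    calc volume (D0 \ G) ^ (((n:ℝ)-1)/n) ≤ volume (D r \ G) ^ (((n:ℝ)-1)/n) :=
          ENNReal.rpow_le_rpow hm0 (div_nonneg (by linarith) (by linarith))
      _ ≤ n * (2 * μH[(n:ℝ)-1] (frontier (D r) \ {x | HasDensity G x 1})) := by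
          refine i.trans ?_
          gcongr
          exact step_perim hG (hD r) hP (hle r hr hp)
      _ ≤ n * (2 * μH[(n:ℝ)-1] (A ∩ (fun x => ‖x‖) ⁻¹' {r})) := by
          gcongr
          rintro x ⟨hx1, hx2⟩
          have := hfr r hr hx1
          exact ⟨⟨hfr1 r hr this, hx2⟩, by simpa using this⟩
      _ = _ := by ring
  calc ENNReal.ofReal (b - a) * volume (D0 \ G) ^ (((n:ℝ)-1)/n)
      = ∫⁻ r in Set.Ioo a b, volume (D0 \ G) ^ (((n:ℝ)-1)/n) := by
        rw [setLIntegral_const, Real.volume_Ioo, mul_comm]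
    _ ≤ ∫⁻ r in Set.Ioo a b, (2 * n) * μH[(n:ℝ)-1] (A ∩ (fun x => ‖x‖) ⁻¹' {r}) :=
        setLIntegral_mono' measurableSet_Ioo hpt
    _ ≤ ∫⁻ r, (2 * n) * μH[(n:ℝ)-1] (A ∩ (fun x => ‖x‖) ⁻¹' {r}) := setLIntegral_le_lintegral _ _
    _ = (2 * n) * ∫⁻ r, μH[(n:ℝ)-1] (A ∩ (fun x => ‖x‖) ⁻¹' {r}) :=
        lintegral_const_mul' _ _ (ENNReal.mul_ne_top (by simp) (by simp))
    _ ≤ (2 * n) * (Cn n * volume A) := by gcongr; exact coarea hn A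
    _ ≤ (2 * n) * (Cn n * volume (D1 \ G)) := by gcongr
    _ = _ := by ring

/-- Abstract decay iteration. -/
theorem decay {n : ℕ} (hn : 1 ≤ n) {h : ℝ → ℝ} {a b K c : ℝ} (hab : a < b)
    (hmono : Monotone h) (hnn : ∀ t, 0 ≤ h t) (hK : 0 ≤ K) (hc : 0 < c)
    (hode : ∀ s t, a < s → s < t → t ≤ b → 0 < h s →
      (t - s) * h s ^ (((n:ℝ)-1)/n) ≤ K * h t)
    (hKc : K * c < (b - a) * (1/2)^n) (hb : h b ≤ c ^ n) : h a = 0 := by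
  have hn0 : (n:ℝ) ≠ 0 := by positivity
  have key : ∀ k : ℕ, h (a + (b-a) * (1/2)^k) ≤ (c * (1/2)^k)^n := by
    intro k
    induction k with
    | zero => simpa using hb
    | succ k ih =>
      by_contra hcon
      push Not at hcon
      set q : ℝ := (1/2)^k with hq
      have hq0 : 0 < q := by positivity
      have hq1 : q ≤ 1 := pow_le_one₀ (by norm_num) (by norm_num)
      have e : (1/2:ℝ)^(k+1) = q/2 := by rw [pow_succ]; ring
      rw [e] at hcon
      have hp : 0 < (c * (q/2))^n := by positivity
      have h1 := hode (a + (b-a)*(q/2)) (a + (b-a)*q) (by have := mul_pos (sub_pos.2 hab) hq0; linarith)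
        (by have := mul_pos (sub_pos.2 hab) hq0; linarith) (by nlinarith) (hp.trans hcon)
      have h2 : (c * (q/2))^(n-1) ≤ h (a + (b-a)*(q/2)) ^ (((n:ℝ)-1)/n) := by
        calc (c * (q/2))^(n-1) = ((c * (q/2))^n) ^ (((n:ℝ)-1)/n) := by
              rw [← Real.rpow_natCast _ n, ← Real.rpow_mul (by positivity), ← Real.rpow_natCast]
              congr 1
              rw [Nat.cast_sub hn]
              field_simp
              simp
          _ ≤ _ := Real.rpow_le_rpow hp.le hcon.le (div_nonneg (by
            have : (1:ℝ) ≤ n := by exact_mod_cast hn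
            linarith) (by positivity))
      have h3 : ((b-a)*(q/2)) * (c * (q/2))^(n-1) ≤ K * (c * q)^n := by
        calc ((b-a)*(q/2)) * (c * (q/2))^(n-1) ≤ ((b-a)*(q/2)) * h (a + (b-a)*(q/2)) ^ (((n:ℝ)-1)/n) := by
              apply mul_le_mul_of_nonneg_left h2
              have := mul_pos (sub_pos.2 hab) hq0; linarith
          _ ≤ K * h (a + (b-a)*q) := by
              refine le_trans (le_of_eq ?_) h1
              ring
          _ ≤ _ := mul_le_mul_of_nonneg_left ih hK
      obtain ⟨j, rfl⟩ : ∃ j, n = j+1 := ⟨n-1, by omega⟩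
      simp only [Nat.add_sub_cancel] at h3
      have h4 : ((b-a)*(q/2)) * (c * (q/2))^j = ((b-a) * (1/2)^(j+1)) * (c^j * q^(j+1)) := by
        rw [mul_pow, div_pow, pow_succ, pow_succ, one_div, inv_pow]
        field_simp
      have h5 : K * (c * q)^(j+1) = (K * c) * (c^j * q^(j+1)) := by
        rw [mul_pow, pow_succ]; ring
      rw [h4, h5] at h3
      have h6 : 0 < c^j * q^(j+1) := by positivity
      exact absurd (le_of_mul_le_mul_right h3 h6) (not_le.2 hKc)
  refine le_antisymm ?_ (hnn a)
  have hlim : Tendsto (fun k : ℕ => (c * (1/2:ℝ)^k)^n) atTop (nhds ((c * 0)^n)) :=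
    ((_root_.tendsto_pow_atTop_nhds_zero_of_lt_one (by norm_num) (by norm_num)).const_mul c).pow n
  rw [mul_zero, zero_pow (by omega)] at hlim
  refine ge_of_tendsto' hlim fun k => ?_
  refine le_trans (hmono ?_) (key k)
  have := mul_pos (sub_pos.2 hab) (show (0:ℝ) < (1/2)^k by positivity)
  linarith

def Kn (n : ℕ) : ℝ := (2 * n * Cn n).toReal
theorem Kn_nonneg (n : ℕ) : 0 ≤ Kn n := ENNReal.toReal_nonneg

theorem toReal_ode {n : ℕ} {x y : ℝ≥0∞} {d θ : ℝ} (hd : 0 ≤ d) (hy : y ≠ ∞)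
    (h : ENNReal.ofReal d * x ^ θ ≤ (2 * n * Cn n) * y) :
    d * x.toReal ^ θ ≤ Kn n * y.toReal := by
  have h2 : (2 * n * Cn n) * y ≠ ∞ := by
    apply ENNReal.mul_ne_top _ hy
    apply ENNReal.mul_ne_top _ (Cn_ne_top n)
    exact ENNReal.mul_ne_top (by simp) (by simp)
  have := ENNReal.toReal_mono h2 h
  rw [ENNReal.toReal_mul, ENNReal.toReal_mul, ENNReal.toReal_ofReal hd, ← ENNReal.toReal_rpow] at this
  exact this

/-- inner vanishing -/
theorem inner_vanish {n : ℕ} (hn : 1 ≤ n) {F : Set (XX n)} (hF : MeasurableSet F)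
    (hP : perimeter F ≠ ∞) {a b c : ℝ} (ha : 0 < a) (hab : a < b) (hc : 0 < c)
    (hKc : Kn n * c < (b - a) * (1/2)^n)
    (hb : volume (ball 0 b \ F) ≤ ENNReal.ofReal (c ^ n))
    (hle : ∀ r, a < r → r < b → volume (ball 0 r \ F) ≠ 0 → perimeter F ≤ perimeter (F ∪ ball 0 r)) :
    volume (ball 0 a \ F) = 0 := by
  have hfin : ∀ t, volume (ball (0:XX n) t \ F) ≠ ∞ := fun t =>
    ne_top_of_le_ne_top measure_ball_lt_top.ne (measure_mono Set.diff_subset)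
  have := decay hn (h := fun t => (volume (ball (0:XX n) t \ F)).toReal) hab
    (fun s t hst => ENNReal.toReal_mono (hfin t) (measure_mono (Set.diff_subset_diff_left (ball_subset_ball hst))))
    (fun t => ENNReal.toReal_nonneg) (Kn_nonneg n) hc ?_ hKc ?_
  · rcases (ENNReal.toReal_eq_zero_iff _).1 this with h | h
    · exact h
    · exact absurd h (hfin a)
  · intro s t has hst htb hs
    refine toReal_ode (by linarith) (hfin t) ?_
    have := ode_step hn (G := F) (D0 := ball 0 s) (D1 := ball 0 t) (D := fun r => ball 0 r) (a := s) (b := t)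
      hF (fun r => measurableSet_ball) hP (fun r _ => frontier_ball_subset_sphere)
      (fun r hr x hx => by simp at hx ⊢; rw [hx]; exact hr.2) (fun r hr => ball_subset_ball hr.1.le)
      (fun r hr => ball_subset_ball hr.2.le) (fun h => by rw [h] at hs; simp at hs) (hfin t)
      (fun r hr => hle r (by linarith [hr.1]) (by linarith [hr.2]))
    exact this
  · exact ENNReal.toReal_le_of_le_ofReal (by positivity) hb

/-- outer vanishing -/
theorem outer_vanish {n : ℕ} (hn : 1 ≤ n) {F : Set (XX n)} (hF : MeasurableSet F)
    (hP : perimeter F ≠ ∞) (hV : volume F ≠ ∞) {a b c : ℝ} (hab : a < b) (hc : 0 < c)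
    (hKc : Kn n * c < (b - a) * (1/2)^n)
    (hb : volume (F \ ball 0 a) ≤ ENNReal.ofReal (c ^ n))
    (hle : ∀ r, a < r → r < b → volume (F \ ball 0 r) ≠ 0 → perimeter F ≤ perimeter (F ∩ ball 0 r)) :
    volume (F \ ball 0 b) = 0 := by
  have hfin : ∀ t, volume (F \ ball (0:XX n) t) ≠ ∞ := fun t =>
    ne_top_of_le_ne_top hV (measure_mono Set.diff_subset)
  have eq : ∀ t : ℝ, (ball (0:XX n) t)ᶜ \ Fᶜ = F \ ball 0 t := by
    intro t; ext x; simp; tauto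
  have := decay hn (h := fun t => (volume (F \ ball (0:XX n) (-t))).toReal) (a := -b) (b := -a) (K := Kn n) (c := c) (by linarith)
    (fun s t hst => ENNReal.toReal_mono (hfin _) (measure_mono (Set.diff_subset_diff_right (ball_subset_ball (by linarith)))))
    (fun t => ENNReal.toReal_nonneg) (Kn_nonneg n) hc ?_ (by linarith) ?_
  · simp only [neg_neg] at this
    rcases (ENNReal.toReal_eq_zero_iff _).1 this with h | h
    · exact h
    · exact absurd h (hfin b)
  · intro s t has hst htb hs
    refine toReal_ode (by linarith) (hfin _) ?_
    have := ode_step hn (G := Fᶜ) (D0 := (ball 0 (-s))ᶜ) (D1 := (ball 0 (-t))ᶜ) (D := fun r => (ball 0 r)ᶜ) (a := -t) (b := -s)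
      hF.compl (fun r => measurableSet_ball.compl) (by unfold perimeter; rw [essBoundary_compl hF]; exact hP)
      (fun r _ => by rw [frontier_compl]; exact frontier_ball_subset_sphere)
      (fun r hr x hx => by simp at hx ⊢; rw [hx]; exact hr.1.le)
      (fun r hr => Set.compl_subset_compl.2 (ball_subset_ball hr.2.le))
      (fun r hr => Set.compl_subset_compl.2 (ball_subset_ball hr.1.le))
      (fun h => by rw [eq] at h; rw [h] at hs; simp at hs) (by rw [eq]; exact hfin _)
      (fun r hr hne => by
        rw [eq] at hne
        rw [← Set.compl_inter]
        unfold perimeter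
        rw [essBoundary_compl hF, essBoundary_compl (hF.inter measurableSet_ball)]
        exact hle r (by linarith [hr.1]) (by linarith [hr.2]) hne)
    rw [eq, eq] at this
    convert this using 3
    ring
  · simp only [neg_neg]
    exact ENNReal.toReal_le_of_le_ofReal (by positivity) hb


theorem density_third {n : ℕ} [NeZero n] {F : Set (XX n)} {p : XX n} (h : HasDensity F p 1) :
    ∀ᶠ r in nhdsWithin (0:ℝ) (Set.Ioi 0), volume (ball (0:XX n) r) / 3 < volume (F ∩ ball p r) := by
  have := h.eventually (lt_mem_nhds (show (1/3:ℝ) < 1 by norm_num))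
  filter_upwards [this, self_mem_nhdsWithin] with r hr hr0
  have hpos := vol_ball_pos p hr0
  rw [← Measure.addHaar_ball_center volume p r]
  have hf : volume (ball p r) ≠ ∞ := measure_ball_lt_top.ne
  have hf2 : volume (F ∩ ball p r) ≠ ∞ := ne_top_of_le_ne_top hf (measure_mono Set.inter_subset_right)
  have hpos' : 0 < (volume (ball p r)).toReal := ENNReal.toReal_pos (by
    have := measure_ball_pos volume p hr0
    exact this.ne') hf
  rw [lt_div_iff₀ hpos'] at hr
  rw [← ENNReal.toReal_lt_toReal (ENNReal.div_ne_top hf (by simp)) hf2, ENNReal.toReal_div]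
  norm_num
  linarith

theorem mixed_step {n : ℕ} [NeZero n] {F : Set (XX n)} (hF : MeasurableSet F) {z : XX n} {ρ : ℝ}
    (h1 : volume (F ∩ ball z ρ) ≠ 0) (h2 : volume (Fᶜ ∩ ball z ρ) ≠ 0) {e : ℝ} (he : 0 < e) :
    ∃ y r, 0 < r ∧ r < e ∧ closedBall y r ⊆ ball z ρ ∧
      volume (ball (0:XX n) r) / 3 < volume (F ∩ ball y r) ∧
      volume (ball (0:XX n) r) / 3 < volume (Fᶜ ∩ ball y r) := by
  have pick : ∀ {G : Set (XX n)}, MeasurableSet G → volume (G ∩ ball z ρ) ≠ 0 →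
      ∃ p ∈ ball z ρ, HasDensity G p 1 := by
    intro G hG hne
    by_contra hc
    push Not at hc
    apply hne
    rw [measure_eq_zero_iff_ae_notMem]
    filter_upwards [ae_hasDensity hG] with x hx hxG
    exact hc x hxG.2 (hx hxG.1)
  obtain ⟨p, hp, hpd⟩ := pick hF h1
  obtain ⟨q, hq, hqd⟩ := pick hF.compl h2
  rw [mem_ball] at hp hq
  set M := max (dist p z) (dist q z) with hM
  have hMρ : M < ρ := max_lt hp hq
  obtain ⟨r, ⟨hr1, hr2⟩, hr0, hr3⟩ := ((density_third hpd).and (density_third hqd)).and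
    (Ioo_mem_nhdsGT (show 0 < min e (ρ - M) from lt_min he (by linarith))) |>.exists
  have hre : r < e := lt_of_lt_of_le hr3 (min_le_left _ _)
  have hrM : r < ρ - M := lt_of_lt_of_le hr3 (min_le_right _ _)
  have hpre : IsPreconnected (closedBall z M) := (convex_closedBall z M).isPreconnected
  obtain ⟨y, hy, hy1, hy2⟩ := hpre _ _ (isOpen_ball_measure volume F r (volume (ball (0:XX n) r) / 3))
    (isOpen_ball_measure volume Fᶜ r (volume (ball (0:XX n) r) / 3)) (by
      intro y _
      by_contra hc
      simp only [Set.mem_union, Set.mem_setOf_eq, not_or, not_lt] at hc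
      have hs : volume (F ∩ ball y r) + volume (Fᶜ ∩ ball y r) = volume (ball y r) := by
        rw [Set.inter_comm, Set.inter_comm Fᶜ, ← Set.diff_eq]
        exact measure_inter_add_sdiff _ hF
      rw [Measure.addHaar_ball_center] at hs
      have hf : volume (ball (0:XX n) r) ≠ ∞ := measure_ball_lt_top.ne
      have hp0 : volume (ball (0:XX n) r) ≠ 0 := (measure_ball_pos volume _ hr0).ne'
      have := hs.symm.le.trans (add_le_add hc.1 hc.2)
      have h3 := ENNReal.toReal_mono (by
        apply ENNReal.add_ne_top.2
        exact ⟨ENNReal.div_ne_top hf (by simp), ENNReal.div_ne_top hf (by simp)⟩) this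
      have hd : volume (ball (0:XX n) r) / 3 ≠ ∞ := ENNReal.div_ne_top hf (by simp)
      rw [ENNReal.toReal_add hd hd, ENNReal.toReal_div] at h3
      have := ENNReal.toReal_pos hp0 hf
      norm_num at h3
      linarith) ⟨p, mem_closedBall.2 (le_max_left _ _), hr1⟩ ⟨q, mem_closedBall.2 (le_max_right _ _), hr2⟩
  refine ⟨y, r, hr0, hre, ?_, hy1, hy2⟩
  apply closedBall_subset_ball'
  rw [mem_closedBall] at hy
  linarith

theorem not_density_zero {n : ℕ} [NeZero n] {G : Set (XX n)} {x : XX n} {y : ℕ → XX n} {r : ℕ → ℝ}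
    (hr : ∀ k, 0 < r k) (hlim : Tendsto r atTop (nhds 0)) (hx : ∀ k, x ∈ closedBall (y k) (r k))
    (hG : ∀ k, volume (ball (0:XX n) (r k)) / 3 < volume (G ∩ ball (y k) (r k))) :
    ¬ HasDensity G x 0 := by
  intro h
  have ht : Tendsto (fun k => 2 * r k) atTop (nhdsWithin 0 (Set.Ioi 0)) := by
    rw [tendsto_nhdsWithin_iff]
    refine ⟨by simpa using hlim.const_mul 2, Eventually.of_forall fun k => ?_⟩
    have := hr k
    simp [this]
  have h2 := (h.comp ht).eventually (gt_mem_nhds (show (0:ℝ) < (1/3) * (1/2)^n by positivity))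
  obtain ⟨k, hk⟩ := h2.exists
  simp only [Function.comp] at hk
  have hf : volume (ball x (2 * r k)) ≠ ∞ := measure_ball_lt_top.ne
  have h0 : 0 < (volume (ball x (2 * r k))).toReal :=
    ENNReal.toReal_pos (measure_ball_pos volume _ (by linarith [hr k])).ne' hf
  rw [div_lt_iff₀ h0] at hk
  have hfb : volume (ball (0:XX n) (r k)) ≠ ∞ := measure_ball_lt_top.ne
  have h3 : (volume (ball x (2 * r k))).toReal = 2^n * (volume (ball (0:XX n) (r k))).toReal := by
    rw [Measure.addHaar_ball_center, Measure.addHaar_ball_mul _ _ (by norm_num)]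
    rw [ENNReal.toReal_mul, ENNReal.toReal_ofReal (by positivity), finrank_euclideanSpace_fin]
  have h4 : (volume (ball (0:XX n) (r k))).toReal / 3 ≤ (volume (G ∩ ball x (2 * r k))).toReal := by
    have := ENNReal.toReal_mono (ne_top_of_le_ne_top hf (measure_mono Set.inter_subset_right))
      ((hG k).le.trans (measure_mono (show G ∩ ball (y k) (r k) ⊆ G ∩ ball x (2 * r k) from by
        apply Set.inter_subset_inter_right
        apply ball_subset_ball'
        have := hx k
        rw [mem_closedBall, dist_comm] at this
        linarith)))
    rw [ENNReal.toReal_div] at this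
    simpa using this
  rw [h3] at hk
  have h5 : (1/3:ℝ) * (1/2)^n * (2^n * (volume (ball (0:XX n) (r k))).toReal) =
    (volume (ball (0:XX n) (r k))).toReal / 3 := by
    rw [one_div 2, inv_pow]
    field_simp
  rw [h5] at hk
  linarith

theorem exists_essBoundary {n : ℕ} [NeZero n] {F : Set (XX n)} (hF : MeasurableSet F) {z : XX n} {ρ : ℝ}
    (h1 : volume (F ∩ ball z ρ) ≠ 0) (h2 : volume (Fᶜ ∩ ball z ρ) ≠ 0) :
    ∃ x ∈ ball z ρ, x ∈ essBoundary F := by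
  set S := {q : XX n × ℝ // volume (F ∩ ball q.1 q.2) ≠ 0 ∧ volume (Fᶜ ∩ ball q.1 q.2) ≠ 0}
  have next : ∀ (k : ℕ) (q : S), ∃ q' : S, 0 < q'.1.2 ∧ q'.1.2 < (1/2)^k ∧
      closedBall q'.1.1 q'.1.2 ⊆ ball q.1.1 q.1.2 ∧
      volume (ball (0:XX n) q'.1.2) / 3 < volume (F ∩ ball q'.1.1 q'.1.2) ∧
      volume (ball (0:XX n) q'.1.2) / 3 < volume (Fᶜ ∩ ball q'.1.1 q'.1.2) := by
    intro k q
    obtain ⟨y, r, hr0, hre, hsub, ha, hb⟩ := mixed_step hF q.2.1 q.2.2 (show (0:ℝ) < (1/2)^k by positivity)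
    exact ⟨⟨(y, r), (pos_of_gt ha).ne', (pos_of_gt hb).ne'⟩, hr0, hre, hsub, ha, hb⟩
  choose N hN0 hN1 hN2 hN3 hN4 using next
  let s : ℕ → S := fun k => Nat.rec (N 0 ⟨(z, ρ), h1, h2⟩) (fun k q => N (k+1) q) k
  have hs0 : s 0 = N 0 ⟨(z, ρ), h1, h2⟩ := rfl
  have hs1 : ∀ k, s (k+1) = N (k+1) (s k) := fun k => rfl
  have hex : ∀ k, ∃ q, s k = N k q := by
    intro k
    cases k with
    | zero => exact ⟨_, hs0⟩
    | succ k => exact ⟨_, hs1 k⟩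
  have hr0 : ∀ k, 0 < (s k).1.2 := fun k => by
    obtain ⟨q, hq⟩ := hex k; rw [hq]; exact hN0 k q
  have hre : ∀ k, (s k).1.2 < (1/2)^k := fun k => by
    obtain ⟨q, hq⟩ := hex k; rw [hq]; exact hN1 k q
  have h3 : ∀ k, volume (ball (0:XX n) (s k).1.2) / 3 < volume (F ∩ ball (s k).1.1 (s k).1.2) := fun k => by
    obtain ⟨q, hq⟩ := hex k; rw [hq]; exact hN3 k q
  have h4 : ∀ k, volume (ball (0:XX n) (s k).1.2) / 3 < volume (Fᶜ ∩ ball (s k).1.1 (s k).1.2) := fun k => by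
    obtain ⟨q, hq⟩ := hex k; rw [hq]; exact hN4 k q
  have hsub : ∀ k, closedBall (s (k+1)).1.1 (s (k+1)).1.2 ⊆ closedBall (s k).1.1 (s k).1.2 := fun k => by
    rw [hs1 k]; exact (hN2 (k+1) (s k)).trans ball_subset_closedBall
  obtain ⟨x, hx⟩ := IsCompact.nonempty_iInter_of_sequence_nonempty_isCompact_isClosed
    (fun k => closedBall (s k).1.1 (s k).1.2) hsub (fun k => nonempty_closedBall.2 (hr0 k).le)
    (isCompact_closedBall _ _) (fun k => isClosed_closedBall)
  rw [Set.mem_iInter] at hx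
  have hlim : Tendsto (fun k => (s k).1.2) atTop (nhds 0) :=
    squeeze_zero (fun k => (hr0 k).le) (fun k => (hre k).le)
      (_root_.tendsto_pow_atTop_nhds_zero_of_lt_one (by norm_num) (by norm_num))
  refine ⟨x, hN2 0 ⟨(z, ρ), h1, h2⟩ (hx 0), not_density_zero hr0 hlim hx h3, ?_⟩
  rw [hasDensity_one_iff hF]
  exact not_density_zero hr0 hlim hx h4

theorem hausdorff_close {n : ℕ} [NeZero n] {F : Set (XX n)} (hF : MeasurableSet F) {η : ℝ}
    (hη : 0 < η) (hη2 : η < 1/2) (h1 : volume (ball 0 (1 - η) \ F) = 0)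
    (h2 : volume (F \ ball 0 (1 + η)) = 0) :
    hausdorffEDist (essBoundary F) (sphere (0 : XX n) 1) ≤ ENNReal.ofReal (2 * η) := by
  apply hausdorffEDist_le_of_mem_edist
  · rintro x ⟨hx0, hx1⟩
    have ha : 1 - η ≤ ‖x‖ := by
      by_contra hc
      push Not at hc
      apply hx1
      apply hasDensity_one_of_null hF (ρ := 1 - η - ‖x‖) (by linarith)
      refine measure_mono_null (Set.diff_subset_diff_left (ball_subset_ball' ?_)) h1
      simp
    have hb : ‖x‖ ≤ 1 + η := by
      by_contra hc
      push Not at hc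
      apply hx0
      apply hasDensity_zero_of_null (ρ := ‖x‖ - (1 + η)) (by linarith)
      refine measure_mono_null ?_ h2
      rintro y ⟨hy, hyb⟩
      refine ⟨hy, fun hy2 => ?_⟩
      rw [mem_ball, dist_eq_norm] at hyb
      rw [mem_ball_zero_iff] at hy2
      have := norm_sub_norm_le x y
      rw [norm_sub_rev] at this
      linarith
    have hxp : 0 < ‖x‖ := by linarith
    refine ⟨‖x‖⁻¹ • x, ?_, ?_⟩
    · simp [norm_smul, hxp.ne']
    · rw [edist_dist]
      apply ENNReal.ofReal_le_ofReal
      rw [dist_eq_norm]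
      have e : x - ‖x‖⁻¹ • x = ((‖x‖ - 1) * ‖x‖⁻¹) • x := by
        rw [sub_mul, sub_smul, mul_inv_cancel₀ hxp.ne', one_mul, one_smul]
      rw [e, norm_smul, norm_mul, norm_inv, norm_norm, mul_assoc, inv_mul_cancel₀ hxp.ne', mul_one,
        Real.norm_eq_abs, abs_le]
      constructor <;> linarith
  · intro x hx
    rw [mem_sphere_zero_iff_norm] at hx
    have hin : ball ((1 - 3/2*η) • x) (η/2) ⊆ ball 0 (1 - η) ∩ ball x (2*η) := by
      apply Set.subset_inter
      · apply ball_subset_ball'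
        rw [dist_zero_right, norm_smul, hx, Real.norm_eq_abs, abs_of_nonneg (by linarith)]
        linarith
      · apply ball_subset_ball'
        have : (1 - 3/2*η) • x - x = (-(3/2*η)) • x := by
          rw [sub_smul, one_smul, neg_smul]; abel
        rw [dist_eq_norm, this, norm_smul, hx, Real.norm_eq_abs, abs_neg, abs_of_nonneg (by linarith)]
        linarith
    have hout : ball ((1 + 3/2*η) • x) (η/2) ⊆ (ball 0 (1 + η))ᶜ ∩ ball x (2*η) := by
      apply Set.subset_inter
      · intro y hy hy2
        rw [mem_ball, dist_eq_norm] at hy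
        rw [mem_ball_zero_iff] at hy2
        have := norm_sub_norm_le ((1 + 3/2*η) • x) y
        rw [norm_sub_rev, norm_smul, hx, Real.norm_eq_abs, abs_of_nonneg (by linarith)] at this
        linarith
      · apply ball_subset_ball'
        have : (1 + 3/2*η) • x - x = (3/2*η) • x := by
          rw [add_smul, one_smul]; abel
        rw [dist_eq_norm, this, norm_smul, hx, Real.norm_eq_abs, abs_of_nonneg (by linarith)]
        linarith
    have hp : ∀ z : XX n, volume (ball z (η/2)) ≠ 0 := fun z => (measure_ball_pos volume z (by linarith)).ne'
    obtain ⟨y, hy, hyF⟩ := exists_essBoundary hF (z := x) (ρ := 2*η) (by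
      intro h
      apply hp ((1 - 3/2*η) • x)
      refine measure_mono_null (t := (ball 0 (1 - η) \ F) ∪ (F ∩ ball x (2*η))) ?_ (measure_union_null h1 h)
      intro y hy
      by_cases hyF : y ∈ F
      · exact Or.inr ⟨hyF, (hin hy).2⟩
      · exact Or.inl ⟨(hin hy).1, hyF⟩) (by
      intro h
      apply hp ((1 + 3/2*η) • x)
      refine measure_mono_null (t := (F \ ball 0 (1 + η)) ∪ (Fᶜ ∩ ball x (2*η))) ?_ (measure_union_null h2 h)
      intro y hy
      by_cases hyF : y ∈ F
      · exact Or.inl ⟨hyF, (hout hy).1⟩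
      · exact Or.inr ⟨hyF, (hout hy).2⟩)
    refine ⟨y, hyF, ?_⟩
    rw [edist_dist]
    apply ENNReal.ofReal_le_ofReal
    rw [mem_ball, dist_comm] at hy
    exact hy.le


theorem setLIntegral_smul_set {n : ℕ} {c : ℝ} (hc : 0 < c) (E : Set (XX n)) (f : XX n → ℝ≥0∞) :
    ∫⁻ x in c • E, f x = ENNReal.ofReal (c ^ n) * ∫⁻ x in E, f (c • x) := by
  have hemb : MeasurableEmbedding (fun x : XX n => c • x) :=
    (Homeomorph.smulOfNeZero c hc.ne').measurableEmbedding
  have hmap := Measure.map_addHaar_smul (volume : Measure (XX n)) hc.ne'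
  have hpre : (fun x : XX n => c • x) ⁻¹' (c • E) = E := by
    ext x
    simp [Set.smul_mem_smul_set_iff₀ hc.ne']
  have h1 : ∫⁻ x in E, f (c • x) = ENNReal.ofReal (abs (c ^ n)⁻¹) * ∫⁻ x in c • E, f x := by
    have := hemb.lintegral_map (μ := volume.restrict E) f
    rw [← this]
    have h2 := hemb.restrict_map volume (c • E)
    rw [hpre] at h2
    rw [← h2, hmap, finrank_euclideanSpace_fin, Measure.restrict_smul, lintegral_smul_measure]
    simp
  rw [h1, ← mul_assoc, ← ENNReal.ofReal_mul (by positivity), abs_of_pos (by positivity),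
    mul_inv_cancel₀ (by positivity), ENNReal.ofReal_one, one_mul]

theorem vol_smul_set {n : ℕ} {c : ℝ} (hc : 0 < c) (E : Set (XX n)) :
    volume (c • E) = ENNReal.ofReal (c ^ n) * volume E := by
  rw [Measure.addHaar_smul, finrank_euclideanSpace_fin, abs_of_pos (by positivity)]

theorem potEnergy_smul {n : ℕ} {c β A : ℝ} (hc : 0 < c) (hA : 0 ≤ A) (E : Set (XX n)) :
    potEnergy β A (c • E) = ENNReal.ofReal (c ^ ((n:ℝ) + β)) * potEnergy β A E := by
  unfold potEnergy
  rw [setLIntegral_smul_set hc, Real.rpow_add hc, ENNReal.ofReal_mul (by positivity), Real.rpow_natCast, mul_assoc]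
  congr 1
  rw [← lintegral_const_mul' _ _ ENNReal.ofReal_ne_top]
  apply lintegral_congr
  intro x
  rw [← ENNReal.ofReal_mul (by positivity), norm_smul, Real.norm_eq_abs, abs_of_pos hc,
    Real.mul_rpow hc.le (norm_nonneg _)]
  congr 1
  ring

theorem rieszEnergy_smul {n : ℕ} {c α : ℝ} (hc : 0 < c) (E : Set (XX n)) :
    rieszEnergy α (c • E) = ENNReal.ofReal (c ^ ((n:ℝ) + α)) * rieszEnergy α E := by
  unfold rieszEnergy
  rw [setLIntegral_smul_set hc]
  have : ∀ x : XX n, ∫⁻ y in c • E, ENNReal.ofReal (‖c • x - y‖ ^ (α - (n:ℝ))) =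
      ENNReal.ofReal (c ^ α) * ∫⁻ y in E, ENNReal.ofReal (‖x - y‖ ^ (α - (n:ℝ))) := by
    intro x
    rw [setLIntegral_smul_set hc, ← lintegral_const_mul' _ _ ENNReal.ofReal_ne_top, ← lintegral_const_mul' _ _ ENNReal.ofReal_ne_top]
    apply lintegral_congr
    intro y
    rw [← ENNReal.ofReal_mul (by positivity), ← ENNReal.ofReal_mul (by positivity), ← smul_sub, norm_smul, Real.norm_eq_abs, abs_of_pos hc,
      Real.mul_rpow hc.le (norm_nonneg _), ← mul_assoc, ← Real.rpow_natCast, ← Real.rpow_add hc]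
    congr 3
    ring
  simp_rw [this]
  rw [lintegral_const_mul' _ _ ENNReal.ofReal_ne_top, ← mul_assoc, ← ENNReal.ofReal_mul (by positivity),
    ← Real.rpow_natCast, ← Real.rpow_add hc]

theorem totalEnergy_smul {n : ℕ} [NeZero n] {c α β A : ℝ} (hc : 0 < c) (hA : 0 ≤ A) (E : Set (XX n)) :
    totalEnergy α β A (c • E) = ENNReal.ofReal (c ^ ((n:ℝ) - 1)) * perimeter E +
      ENNReal.ofReal (c ^ ((n:ℝ) + α)) * rieszEnergy α E +
      ENNReal.ofReal (c ^ ((n:ℝ) + β)) * potEnergy β A E := by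
  unfold totalEnergy
  rw [perimeter_smul hc, rieszEnergy_smul hc, potEnergy_smul hc hA]

/-- local mass of the Riesz kernel -/
def Rk (n : ℕ) (α : ℝ) : ℝ≥0∞ := ∫⁻ y in ball (0 : XX n) 1, ENNReal.ofReal (‖y‖ ^ (α - (n:ℝ)))

theorem Rk_ne_top {n : ℕ} [NeZero n] {α : ℝ} (hα : 0 < α) : Rk n α ≠ ∞ := by
  have hn : 1 ≤ n := Nat.one_le_iff_ne_zero.2 (NeZero.ne n)
  have h1 : IntegrableOn (fun x : XX n => ‖x‖ ^ (α - (n:ℝ))) (ball 0 1) volume := by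
    rw [integrableOn_fun_norm_addHaar volume (f := fun t : ℝ => t ^ (α - (n:ℝ)))]
    rw [finrank_euclideanSpace_fin]
    have h2 : IntegrableOn (fun y : ℝ => y ^ (α - 1)) (Set.Ioo 0 1) := by
      have := (intervalIntegral.intervalIntegrable_rpow' (a := 0) (b := 1) (r := α - 1) (by linarith))
      rw [intervalIntegrable_iff_integrableOn_Ioo_of_le (by norm_num)] at this
      exact this
    refine h2.congr_fun ?_ measurableSet_Ioo
    intro y hy
    simp only [smul_eq_mul]
    rw [← Real.rpow_natCast, ← Real.rpow_add hy.1]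
    congr 1
    rw [Nat.cast_sub hn]
    push_cast
    ring
  have h3 := h1.2
  rw [hasFiniteIntegral_iff_ofReal (Eventually.of_forall fun x => by positivity)] at h3
  exact h3.ne

theorem kernel_bound {n : ℕ} [NeZero n] {α : ℝ} (hαn : α < n) (G : Set (XX n)) (x : XX n) :
    ∫⁻ y in G, ENNReal.ofReal (‖x - y‖ ^ (α - (n:ℝ))) ≤ Rk n α + volume G := by
  have hsplit : ∫⁻ y in G, ENNReal.ofReal (‖x - y‖ ^ (α - (n:ℝ))) ≤
      ∫⁻ y in G, ((ball x 1).indicator (fun y => ENNReal.ofReal (‖x - y‖ ^ (α - (n:ℝ)))) y + 1) := by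
    apply lintegral_mono
    intro y
    by_cases hy : y ∈ ball x 1
    · simp only [Set.indicator_of_mem hy]
      exact le_self_add
    · simp only [Set.indicator_of_notMem hy, zero_add]
      rw [mem_ball, dist_comm, dist_eq_norm, not_lt] at hy
      rw [← ENNReal.ofReal_one]
      apply ENNReal.ofReal_le_ofReal
      exact Real.rpow_le_one_of_one_le_of_nonpos hy (by linarith)
  refine hsplit.trans ?_
  rw [lintegral_add_right _ measurable_const]
  gcongr
  · refine (setLIntegral_le_lintegral _ _).trans ?_
    rw [lintegral_indicator measurableSet_ball]
    apply le_of_eq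
    unfold Rk
    have := (Measure.measurePreserving_sub_left (volume : Measure (XX n)) x).setLIntegral_comp_preimage_emb
      (Homeomorph.subLeft x).measurableEmbedding (fun y => ENNReal.ofReal (‖y‖ ^ (α - (n:ℝ)))) (ball 0 1)
    rw [← this]
    congr 2
    ext y
    simp [dist_eq_norm, norm_sub_rev]
  · simp

theorem kernel_meas {n : ℕ} (α : ℝ) :
    Measurable (fun p : XX n × XX n => ENNReal.ofReal (‖p.1 - p.2‖ ^ (α - (n:ℝ)))) := by
  fun_prop

theorem rieszEnergy_le {n : ℕ} [NeZero n] {α : ℝ} (hαn : α < n) (G : Set (XX n)) :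
    rieszEnergy α G ≤ volume G * (Rk n α + volume G) := by
  unfold rieszEnergy
  calc _ ≤ ∫⁻ x in G, (Rk n α + volume G) := lintegral_mono fun x => kernel_bound hαn G x
    _ = _ := by rw [setLIntegral_const, mul_comm]

theorem rieszEnergy_mono {n : ℕ} {α : ℝ} {G H : Set (XX n)} (h : G ⊆ H) :
    rieszEnergy α G ≤ rieszEnergy α H := by
  unfold rieszEnergy
  calc _ ≤ ∫⁻ x in G, ∫⁻ y in H, ENNReal.ofReal (‖x - y‖ ^ (α - (n : ℝ))) :=
        lintegral_mono fun x => lintegral_mono_set h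
    _ ≤ _ := lintegral_mono_set h

theorem dbl_union {n : ℕ} (k : XX n → XX n → ℝ≥0∞) (hk : Measurable (Function.uncurry k))
    (hsym : ∀ x y, k x y = k y x) {R : ℝ≥0∞}
    (hb : ∀ (S : Set (XX n)) (x : XX n), ∫⁻ y in S, k x y ≤ R + volume S) {F D : Set (XX n)}
    (hD : MeasurableSet D) (hdisj : Disjoint F D) :
    ∫⁻ x in F ∪ D, ∫⁻ y in F ∪ D, k x y ≤
      (∫⁻ x in F, ∫⁻ y in F, k x y) + volume D * (2 * R + 2 * volume F + volume D) := by
  have e : ∫⁻ x in F ∪ D, ∫⁻ y in F ∪ D, k x y =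
      (∫⁻ x in F, ∫⁻ y in F ∪ D, k x y) + (∫⁻ x in D, ∫⁻ y in F ∪ D, k x y) :=
    lintegral_union hD hdisj
  have e0 : Measurable (fun x => ∫⁻ y in F, k x y) := hk.lintegral_prod_right'
  have e1 : ∫⁻ x in F, ∫⁻ y in F ∪ D, k x y =
      (∫⁻ x in F, ∫⁻ y in F, k x y) + (∫⁻ x in F, ∫⁻ y in D, k x y) := by
    rw [← lintegral_add_left e0]
    apply lintegral_congr
    intro x
    rw [lintegral_union hD hdisj]
  have e2 : ∫⁻ x in F, ∫⁻ y in D, k x y = (∫⁻ y in D, ∫⁻ x in F, k y x) := by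
    rw [lintegral_lintegral_swap hk.aemeasurable]
    simp only [hsym]
  have b1 : ∫⁻ y in D, ∫⁻ x in F, k y x ≤ volume D * (R + volume F) := by
    calc _ ≤ ∫⁻ y in D, (R + volume F) := lintegral_mono fun y => hb F y
      _ = _ := by rw [setLIntegral_const, mul_comm]
  have b2 : ∫⁻ y in D, ∫⁻ x in F ∪ D, k y x ≤ volume D * (R + (volume F + volume D)) := by
    calc _ ≤ ∫⁻ y in D, (R + volume (F ∪ D)) := lintegral_mono fun y => hb (F ∪ D) y
      _ = volume D * (R + volume (F ∪ D)) := by rw [setLIntegral_const, mul_comm]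
      _ ≤ _ := by gcongr; exact measure_union_le _ _
  rw [e, e1, e2]
  calc _ ≤ (∫⁻ x in F, ∫⁻ y in F, k x y) + volume D * (R + volume F) + volume D * (R + (volume F + volume D)) := by
        exact add_le_add (add_le_add le_rfl b1) b2
    _ = _ := by ring

theorem rieszEnergy_union {n : ℕ} [NeZero n] {α : ℝ} (hαn : α < n) {F D : Set (XX n)}
    (hD : MeasurableSet D) (hdisj : Disjoint F D) :
    rieszEnergy α (F ∪ D) ≤ rieszEnergy α F + volume D * (2 * Rk n α + 2 * volume F + volume D) :=
  dbl_union (fun x y => ENNReal.ofReal (‖x - y‖ ^ (α - (n : ℝ)))) (kernel_meas α)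
    (fun x y => by rw [norm_sub_rev]) (fun S x => kernel_bound hαn S x) hD hdisj

theorem potEnergy_inter_add_diff {n : ℕ} {β A : ℝ} (S : Set (XX n)) {T : Set (XX n)} (hT : MeasurableSet T) :
    potEnergy β A (S ∩ T) + potEnergy β A (S \ T) = potEnergy β A S :=
  lintegral_inter_add_sdiff _ S hT

theorem potEnergy_le {n : ℕ} {β A r : ℝ} (hβ : 0 < β) (hA : 0 < A) {S : Set (XX n)}
    (hS : S ⊆ ball 0 r) (hm : MeasurableSet S) :
    potEnergy β A S ≤ ENNReal.ofReal (A * r ^ β) * volume S := by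
  unfold potEnergy
  rw [← setLIntegral_const]
  apply setLIntegral_mono' hm
  intro x hx
  apply ENNReal.ofReal_le_ofReal
  have := hS hx
  rw [mem_ball_zero_iff] at this
  gcongr

theorem potEnergy_ge {n : ℕ} {β A r : ℝ} (hβ : 0 < β) (hA : 0 < A) (hr : 0 ≤ r) {S : Set (XX n)}
    (hS : ∀ x ∈ S, r ≤ ‖x‖) (hm : MeasurableSet S) :
    ENNReal.ofReal (A * r ^ β) * volume S ≤ potEnergy β A S := by
  unfold potEnergy
  rw [← setLIntegral_const]
  apply setLIntegral_mono' hm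
  intro x hx
  apply ENNReal.ofReal_le_ofReal
  have := hS x hx
  gcongr

theorem potEnergy_ball {n : ℕ} [NeZero n] {β A : ℝ} (hβ : 0 < β) (hA : 0 < A) :
    (potEnergy β A (ball (0:XX n) 1)).toReal =
      A * (volume (ball (0:XX n) 1)).toReal * (n / (n + β)) := by
  have hn : 1 ≤ n := Nat.one_le_iff_ne_zero.2 (NeZero.ne n)
  have hn0 : (0:ℝ) < n := by exact_mod_cast hn
  unfold potEnergy
  rw [← integral_eq_lintegral_of_nonneg_ae (Eventually.of_forall fun x => by positivity)
    ((measurable_norm.pow_const β).const_mul A).aestronglyMeasurable, ← integral_indicator measurableSet_ball]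
  have h1 : (fun x : XX n => (ball (0:XX n) 1).indicator (fun x => A * ‖x‖ ^ β) x) =
      fun x => (fun t : ℝ => (Set.Iio 1).indicator (fun t => A * t ^ β) t) ‖x‖ := by
    ext x
    simp [Set.indicator]
  have h2 := integral_fun_norm_addHaar (volume : Measure (XX n)) (fun t : ℝ => (Set.Iio 1).indicator (fun t => A * t ^ β) t)
  rw [h1, h2, finrank_euclideanSpace_fin]
  have h3 : ∫ y in Set.Ioi (0:ℝ), y ^ (n-1) • (Set.Iio 1).indicator (fun t => A * t ^ β) y = A * (1 / (n + β)) := by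
    have : ∫ y in Set.Ioi (0:ℝ), y ^ (n-1) • (Set.Iio 1).indicator (fun t => A * t ^ β) y =
        ∫ y in Set.Ioi (0:ℝ), (Set.Iio 1).indicator (fun y => A * y ^ ((n:ℝ) - 1 + β)) y := by
      apply setIntegral_congr_fun measurableSet_Ioi
      intro y hy
      by_cases hy1 : y < 1
      · simp only [Set.indicator_of_mem (show y ∈ Set.Iio (1:ℝ) from hy1), smul_eq_mul]
        rw [Real.rpow_add hy, ← Real.rpow_natCast, Nat.cast_sub hn]
        push_cast
        ring
      · simp [Set.indicator, hy1]
    rw [this, setIntegral_indicator measurableSet_Iio]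
    have : Set.Ioi (0:ℝ) ∩ Set.Iio 1 = Set.Ioo 0 1 := rfl
    rw [this, ← integral_Ioc_eq_integral_Ioo, ← intervalIntegral.integral_of_le (by norm_num),
      intervalIntegral.integral_const_mul, integral_rpow (Or.inl (by linarith))]
    rw [Real.zero_rpow (by linarith), Real.one_rpow]
    congr 2
    · ring
    · ring
  rw [h3, Measure.real]
  simp
  field_simp


def ScaledMin {n : ℕ} (α β A δ ε : ℝ) (F : Set (XX n)) : Prop :=
  MeasurableSet F ∧ volume F = volume (ball (0:XX n) 1) ∧
    ∀ G : Set (XX n), MeasurableSet G → volume G = volume (ball (0:XX n) 1) →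
      ENNReal.ofReal δ * perimeter F + ENNReal.ofReal ε * rieszEnergy α F + potEnergy β A F ≤
      ENNReal.ofReal δ * perimeter G + ENNReal.ofReal ε * rieszEnergy α G + potEnergy β A G

def om (n : ℕ) : ℝ := (volume (ball (0:XX n) 1)).toReal

theorem om_pos (n : ℕ) : 0 < om n :=
  ENNReal.toReal_pos (measure_ball_pos volume _ one_pos).ne' measure_ball_lt_top.ne

def kap (n : ℕ) (α δ ε : ℝ) : ℝ :=
  δ * (perimeter (ball (0:XX n) 1)).toReal + ε * (rieszEnergy α (ball (0:XX n) 1)).toReal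

theorem potEnergy_ball_ne_top {n : ℕ} {β A : ℝ} (hβ : 0 < β) (hA : 0 < A) :
    potEnergy β A (ball (0:XX n) 1) ≠ ∞ :=
  ne_top_of_le_ne_top (ENNReal.mul_ne_top ENNReal.ofReal_ne_top measure_ball_lt_top.ne)
    (potEnergy_le hβ hA le_rfl measurableSet_ball)

theorem riesz_ne_top {n : ℕ} [NeZero n] {α : ℝ} (hα : 0 < α) (hαn : α < n) {G : Set (XX n)}
    (hG : volume G ≠ ∞) : rieszEnergy α G ≠ ∞ :=
  ne_top_of_le_ne_top (ENNReal.mul_ne_top hG (ENNReal.add_ne_top.2 ⟨Rk_ne_top hα, hG⟩))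
    (rieszEnergy_le hαn G)

theorem toReal_J {δ ε : ℝ} (hδ : 0 ≤ δ) (hε : 0 ≤ ε) {p v u : ℝ≥0∞} (hp : p ≠ ∞) (hv : v ≠ ∞) (hu : u ≠ ∞) :
    (ENNReal.ofReal δ * p + ENNReal.ofReal ε * v + u).toReal = δ * p.toReal + ε * v.toReal + u.toReal := by
  have h1 : ENNReal.ofReal δ * p ≠ ∞ := ENNReal.mul_ne_top ENNReal.ofReal_ne_top hp
  have h2 : ENNReal.ofReal ε * v ≠ ∞ := ENNReal.mul_ne_top ENNReal.ofReal_ne_top hv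
  rw [ENNReal.toReal_add (ENNReal.add_ne_top.2 ⟨h1, h2⟩) hu, ENNReal.toReal_add h1 h2,
    ENNReal.toReal_mul, ENNReal.toReal_mul, ENNReal.toReal_ofReal hδ, ENNReal.toReal_ofReal hε]

theorem J_ne_top {δ ε : ℝ} {p v u : ℝ≥0∞} (hp : p ≠ ∞) (hv : v ≠ ∞) (hu : u ≠ ∞) :
    ENNReal.ofReal δ * p + ENNReal.ofReal ε * v + u ≠ ∞ :=
  ENNReal.add_ne_top.2 ⟨ENNReal.add_ne_top.2 ⟨ENNReal.mul_ne_top ENNReal.ofReal_ne_top hp,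
    ENNReal.mul_ne_top ENNReal.ofReal_ne_top hv⟩, hu⟩

section
variable {n : ℕ} [NeZero n] {α β A δ ε : ℝ} {F : Set (XX n)}

theorem sm_finite (hα : 0 < α) (hαn : α < n) (hβ : 0 < β) (hA : 0 < A) (hδ : 0 < δ)
    (h : ScaledMin α β A δ ε F) :
    perimeter F ≠ ∞ ∧ rieszEnergy α F ≠ ∞ ∧ potEnergy β A F ≠ ∞ := by
  have hn : 1 ≤ n := Nat.one_le_iff_ne_zero.2 (NeZero.ne n)
  have hV : rieszEnergy α F ≠ ∞ := riesz_ne_top hα hαn (by rw [h.2.1]; exact measure_ball_lt_top.ne)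
  have h1 := h.2.2 (ball 0 1) measurableSet_ball rfl
  have h2 := ne_top_of_le_ne_top (J_ne_top (perimeter_ball_ne_top hn)
    (riesz_ne_top hα hαn measure_ball_lt_top.ne) (potEnergy_ball_ne_top hβ hA)) h1
  rw [ENNReal.add_ne_top, ENNReal.add_ne_top] at h2
  refine ⟨?_, hV, h2.2⟩
  intro hp
  apply h2.1.1
  rw [hp, ENNReal.mul_top]
  simpa using hδ

theorem sm_le (hα : 0 < α) (hαn : α < n) (hβ : 0 < β) (hA : 0 < A) (hδ : 0 < δ) (hε : 0 < ε)
    (h : ScaledMin α β A δ ε F) :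
    δ * (perimeter F).toReal + ε * (rieszEnergy α F).toReal + (potEnergy β A F).toReal ≤
      A * om n * (n / (n + β)) + kap n α δ ε := by
  have hn : 1 ≤ n := Nat.one_le_iff_ne_zero.2 (NeZero.ne n)
  obtain ⟨hp, hv, hu⟩ := sm_finite hα hαn hβ hA hδ h
  have hp' := perimeter_ball_ne_top hn
  have hv' := riesz_ne_top hα hαn (measure_ball_lt_top (μ := volume) (x := (0:XX n)) (r := 1)).ne
  have hu' := potEnergy_ball_ne_top (n := n) hβ hA
  have h1 := ENNReal.toReal_mono (J_ne_top hp' hv' hu') (h.2.2 (ball 0 1) measurableSet_ball rfl)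
  rw [toReal_J hδ.le hε.le hp hv hu, toReal_J hδ.le hε.le hp' hv' hu', potEnergy_ball hβ hA] at h1
  unfold kap om
  linarith

theorem min_real (hα : 0 < α) (hαn : α < n) (hβ : 0 < β) (hA : 0 < A) (hδ : 0 < δ) (hε : 0 < ε)
    (h : ScaledMin α β A δ ε F) {G : Set (XX n)} (hG : MeasurableSet G) {w : ℝ} (hw : 0 < w)
    (hGw : volume G = ENNReal.ofReal w) (hP : perimeter G ≠ ∞) (hU : potEnergy β A G ≠ ∞) :
    ∃ μ : ℝ, 0 < μ ∧ μ ^ n = om n / w ∧ μ ^ ((n:ℝ) + β) = (om n / w) ^ (((n:ℝ)+β)/n) ∧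
    δ * (perimeter F).toReal + ε * (rieszEnergy α F).toReal + (potEnergy β A F).toReal ≤
      δ * (μ ^ ((n:ℝ) - 1) * (perimeter G).toReal) + ε * (μ ^ ((n:ℝ) + α) * (rieszEnergy α G).toReal)
        + μ ^ ((n:ℝ) + β) * (potEnergy β A G).toReal := by
  have hn0 : (n:ℝ) ≠ 0 := by exact_mod_cast NeZero.ne n
  have ho : 0 < om n / w := div_pos (om_pos n) hw
  set μ := (om n / w) ^ (1 / (n:ℝ)) with hμ
  have hμ0 : 0 < μ := Real.rpow_pos_of_pos ho _
  have hμn : μ ^ n = om n / w := by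
    rw [hμ, ← Real.rpow_natCast, ← Real.rpow_mul ho.le, one_div, inv_mul_cancel₀ hn0, Real.rpow_one]
  refine ⟨μ, hμ0, hμn, ?_, ?_⟩
  · rw [hμ, ← Real.rpow_mul ho.le]
    congr 1
    ring
  · obtain ⟨hp, hv, hu⟩ := sm_finite hα hαn hβ hA hδ h
    have hv' : rieszEnergy α G ≠ ∞ := riesz_ne_top hα hαn (by rw [hGw]; exact ENNReal.ofReal_ne_top)
    have h1 := h.2.2 (μ • G) (hG.const_smul₀ μ) (by
      rw [vol_smul_set hμ0, hμn, hGw, ← ENNReal.ofReal_mul ho.le, div_mul_cancel₀ _ hw.ne', om,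
        ENNReal.ofReal_toReal measure_ball_lt_top.ne])
    rw [perimeter_smul hμ0, rieszEnergy_smul hμ0, potEnergy_smul hμ0 hA.le] at h1
    have a1 : ENNReal.ofReal (μ ^ ((n:ℝ) - 1)) * perimeter G ≠ ∞ := ENNReal.mul_ne_top ENNReal.ofReal_ne_top hP
    have a2 : ENNReal.ofReal (μ ^ ((n:ℝ) + α)) * rieszEnergy α G ≠ ∞ := ENNReal.mul_ne_top ENNReal.ofReal_ne_top hv'
    have a3 : ENNReal.ofReal (μ ^ ((n:ℝ) + β)) * potEnergy β A G ≠ ∞ := ENNReal.mul_ne_top ENNReal.ofReal_ne_top hU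
    have h2 := ENNReal.toReal_mono (J_ne_top a1 a2 a3) h1
    rw [toReal_J hδ.le hε.le hp hv hu, toReal_J hδ.le hε.le a1 a2 a3] at h2
    simp only [ENNReal.toReal_mul] at h2
    rw [ENNReal.toReal_ofReal (by positivity), ENNReal.toReal_ofReal (by positivity),
      ENNReal.toReal_ofReal (by positivity)] at h2
    exact h2

theorem vol_diff_eq (hF : MeasurableSet F) (hv : volume F = volume (ball (0:XX n) 1)) :
    (volume (F \ ball 0 1)).toReal = (volume (ball 0 1 \ F)).toReal := by
  have hfin : volume (ball (0:XX n) 1) ≠ ∞ := measure_ball_lt_top.ne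
  have h1 := measure_inter_add_sdiff (μ := volume) F (measurableSet_ball (x := (0:XX n)) (ε := 1))
  have h2 := measure_inter_add_sdiff (μ := volume) (ball (0:XX n) 1) hF
  rw [hv, ← h2, Set.inter_comm] at h1
  have hfi : volume (ball (0:XX n) 1 ∩ F) ≠ ∞ := ne_top_of_le_ne_top hfin (measure_mono Set.inter_subset_left)
  rw [(ENNReal.add_right_inj hfi).1 h1]

theorem pot_ne_top_mono {S T : Set (XX n)} (h : S ⊆ T) (hT : potEnergy β A T ≠ ∞) : potEnergy β A S ≠ ∞ :=
  ne_top_of_le_ne_top hT (lintegral_mono_set h)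

/-- quantitative stability of the potential energy -/
theorem pot_stab (hβ : 0 < β) (hA : 0 < A) (hF : MeasurableSet F)
    (hv : volume F = volume (ball (0:XX n) 1)) (hu : potEnergy β A F ≠ ∞) :
    A * om n * (n / (n + β)) ≤ (potEnergy β A F).toReal ∧
    (∀ r, 0 < r → r < 1 → A * om n * (n / (n + β)) + A * (1 - r ^ β) * (volume (ball 0 r \ F)).toReal
      ≤ (potEnergy β A F).toReal) ∧
    (∀ r, 1 < r → A * om n * (n / (n + β)) + A * (r ^ β - 1) * (volume (F \ ball 0 r)).toReal
      ≤ (potEnergy β A F).toReal) := by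
  have hfin : volume (ball (0:XX n) 1) ≠ ∞ := measure_ball_lt_top.ne
  have hfinF : volume F ≠ ∞ := by rw [hv]; exact hfin
  have huB := potEnergy_ball_ne_top (n := n) hβ hA
  have hd := vol_diff_eq hF hv
  -- decompositions
  have d1 : (potEnergy β A (F ∩ ball 0 1)).toReal + (potEnergy β A (F \ ball 0 1)).toReal =
      (potEnergy β A F).toReal := by
    rw [← ENNReal.toReal_add (pot_ne_top_mono Set.inter_subset_left hu) (pot_ne_top_mono Set.diff_subset hu),
      potEnergy_inter_add_diff _ measurableSet_ball]
  have d2 : (potEnergy β A (F ∩ ball 0 1)).toReal + (potEnergy β A (ball 0 1 \ F)).toReal =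
      A * om n * (n / (n + β)) := by
    rw [Set.inter_comm, ← ENNReal.toReal_add (pot_ne_top_mono Set.inter_subset_left huB) (pot_ne_top_mono Set.diff_subset huB),
      potEnergy_inter_add_diff _ hF, potEnergy_ball hβ hA]
    rfl
  have le_real : ∀ {S : Set (XX n)} {r : ℝ}, 0 < r → S ⊆ ball 0 r → MeasurableSet S →
      (potEnergy β A S).toReal ≤ A * r ^ β * (volume S).toReal := by
    intro S r hr hS hm
    have hS' : volume S ≠ ∞ := ne_top_of_le_ne_top measure_ball_lt_top.ne (measure_mono hS)
    have := ENNReal.toReal_mono (ENNReal.mul_ne_top ENNReal.ofReal_ne_top hS') (potEnergy_le hβ hA hS hm)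
    rwa [ENNReal.toReal_mul, ENNReal.toReal_ofReal (by positivity)] at this
  have ge_real : ∀ {S : Set (XX n)} {r : ℝ}, 0 < r → S ⊆ F → (∀ x ∈ S, r ≤ ‖x‖) → MeasurableSet S →
      A * r ^ β * (volume S).toReal ≤ (potEnergy β A S).toReal := by
    intro S r hr hSF hS hm
    have := ENNReal.toReal_mono (pot_ne_top_mono hSF hu) (potEnergy_ge hβ hA hr.le hS hm)
    rwa [ENNReal.toReal_mul, ENNReal.toReal_ofReal (by positivity)] at this
  have hout : A * (volume (F \ ball 0 1)).toReal ≤ (potEnergy β A (F \ ball 0 1)).toReal := by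
    have := ge_real (S := F \ ball 0 1) one_pos Set.diff_subset (fun x hx => by
      have := hx.2; simpa using this) (hF.diff measurableSet_ball)
    simpa using this
  have hin : (potEnergy β A (ball 0 1 \ F)).toReal ≤ A * (volume (ball 0 1 \ F)).toReal := by
    have := le_real (S := ball 0 1 \ F) one_pos Set.diff_subset (measurableSet_ball.diff hF)
    simpa using this
  refine ⟨by rw [hd] at hout; linarith, ?_, ?_⟩
  · intro r hr0 hr1
    have hsub : ball (0:XX n) r \ F ⊆ ball 0 1 \ F := Set.diff_subset_diff_left (ball_subset_ball hr1.le)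
    have hmr : MeasurableSet (ball (0:XX n) r \ F) := measurableSet_ball.diff hF
    have hm1 : MeasurableSet (ball (0:XX n) 1 \ F) := measurableSet_ball.diff hF
    have huD : potEnergy β A (ball 0 1 \ F) ≠ ∞ := pot_ne_top_mono Set.diff_subset huB
    have hvD : volume (ball (0:XX n) 1 \ F) ≠ ∞ := ne_top_of_le_ne_top hfin (measure_mono Set.diff_subset)
    have s1 : (potEnergy β A (ball 0 r \ F)).toReal + (potEnergy β A ((ball 0 1 \ F) \ (ball 0 r \ F))).toReal =
        (potEnergy β A (ball 0 1 \ F)).toReal := by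
      rw [← ENNReal.toReal_add (pot_ne_top_mono hsub huD) (pot_ne_top_mono Set.diff_subset huD),
        ← potEnergy_inter_add_diff (ball 0 1 \ F) hmr, Set.inter_eq_right.2 hsub]
    have s2 : (volume (ball 0 r \ F)).toReal + (volume ((ball 0 1 \ F) \ (ball 0 r \ F))).toReal =
        (volume (ball 0 1 \ F)).toReal := by
      rw [← ENNReal.toReal_add (ne_top_of_le_ne_top hvD (measure_mono hsub)) (ne_top_of_le_ne_top hvD (measure_mono Set.diff_subset)),
        ← measure_inter_add_sdiff (ball 0 1 \ F) hmr, Set.inter_eq_right.2 hsub]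
    have s3 := le_real (S := ball 0 r \ F) hr0 Set.diff_subset hmr
    have s4 := le_real (S := (ball 0 1 \ F) \ (ball 0 r \ F)) one_pos (Set.diff_subset.trans Set.diff_subset) (hm1.diff hmr)
    simp only [Real.one_rpow, mul_one] at s4
    rw [hd] at hout
    have : A * (1 - r ^ β) * (volume (ball 0 r \ F)).toReal = A * (volume (ball 0 r \ F)).toReal
      - A * r ^ β * (volume (ball 0 r \ F)).toReal := by ring
    rw [this]
    have s5 : A * (volume (ball 0 1 \ F)).toReal = A * (volume (ball 0 r \ F)).toReal +
      A * (volume ((ball 0 1 \ F) \ (ball 0 r \ F))).toReal := by rw [← s2]; ring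
    linarith
  · intro r hr1
    have hr0 : 0 < r := by linarith
    have hsub : F \ ball (0:XX n) r ⊆ F \ ball 0 1 := Set.diff_subset_diff_right (ball_subset_ball hr1.le)
    have hmr : MeasurableSet (F \ ball (0:XX n) r) := hF.diff measurableSet_ball
    have hm1 : MeasurableSet (F \ ball (0:XX n) 1) := hF.diff measurableSet_ball
    have huD : potEnergy β A (F \ ball 0 1) ≠ ∞ := pot_ne_top_mono Set.diff_subset hu
    have hvD : volume (F \ ball (0:XX n) 1) ≠ ∞ := ne_top_of_le_ne_top hfinF (measure_mono Set.diff_subset)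
    have s1 : (potEnergy β A (F \ ball 0 r)).toReal + (potEnergy β A ((F \ ball 0 1) \ (F \ ball 0 r))).toReal =
        (potEnergy β A (F \ ball 0 1)).toReal := by
      rw [← ENNReal.toReal_add (pot_ne_top_mono hsub huD) (pot_ne_top_mono Set.diff_subset huD),
        ← potEnergy_inter_add_diff (F \ ball 0 1) hmr, Set.inter_eq_right.2 hsub]
    have s2 : (volume (F \ ball 0 r)).toReal + (volume ((F \ ball 0 1) \ (F \ ball 0 r))).toReal =
        (volume (F \ ball 0 1)).toReal := by
      rw [← ENNReal.toReal_add (ne_top_of_le_ne_top hvD (measure_mono hsub)) (ne_top_of_le_ne_top hvD (measure_mono Set.diff_subset)),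
        ← measure_inter_add_sdiff (F \ ball 0 1) hmr, Set.inter_eq_right.2 hsub]
    have s3 := ge_real (S := F \ ball 0 r) hr0 Set.diff_subset (fun x hx => by
      have := hx.2; simpa using this) hmr
    have s4 := ge_real (S := (F \ ball 0 1) \ (F \ ball 0 r)) one_pos (Set.diff_subset.trans Set.diff_subset) (fun x hx => by
      have := hx.1.2; simpa using this) (hm1.diff hmr)
    simp only [Real.one_rpow, mul_one] at s4
    rw [← hd] at hin
    have : A * (r ^ β - 1) * (volume (F \ ball 0 r)).toReal = A * r ^ β * (volume (F \ ball 0 r)).toReal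
      - A * (volume (F \ ball 0 r)).toReal := by ring
    rw [this]
    have s5 : A * (volume (F \ ball 0 1)).toReal = A * (volume (F \ ball 0 r)).toReal +
      A * (volume ((F \ ball 0 1) \ (F \ ball 0 r))).toReal := by rw [← s2]; ring
    linarith

end


theorem inner_arith {ω h s T ε C U U0 A ρ : ℝ} (hω : 0 < ω) (hh : 0 < h) (hhω : h ≤ ω) (hs : 1 ≤ s)
    (hε : 0 < ε) (hC : 0 ≤ C) (hA : 0 < A)
    (hT : T = (ω / (ω + h)) ^ s) (hU0 : U0 = A * ω / s) (hU : U0 ≤ U)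
    (hle : U ≤ ε * (C * h) + T * (U + A * ρ * h)) : A * (1 - ρ) ≤ ε * C * 2 ^ s := by
  set S : ℝ := (1 + h / ω) ^ s with hS
  have hx : 0 < h / ω := div_pos hh hω
  have hS0 : 0 < S := Real.rpow_pos_of_pos (by linarith) _
  have hST : S * T = 1 := by
    rw [hS, hT, ← Real.mul_rpow (by positivity) (by positivity)]
    have : (1 + h / ω) * (ω / (ω + h)) = 1 := by field_simp
    rw [this, Real.one_rpow]
  have hS1 : 1 + s * (h / ω) ≤ S := one_add_mul_self_le_rpow_one_add (by linarith) hs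
  have hS2 : S ≤ 2 ^ s := Real.rpow_le_rpow (by positivity) (by
    have : h / ω ≤ 1 := (div_le_one hω).2 hhω
    linarith) (by linarith)
  have h1 : S * U ≤ ε * (C * h) * S + (U + A * ρ * h) := by
    have := mul_le_mul_of_nonneg_left hle hS0.le
    have e : S * (ε * (C * h) + T * (U + A * ρ * h)) = ε * (C * h) * S + S * T * (U + A * ρ * h) := by ring
    rw [e, hST] at this
    linarith
  have h2 : A * h ≤ (S - 1) * U := by
    have e : A * h = (s * (h / ω)) * (A * ω / s) := by
      have : s ≠ 0 := by linarith
      field_simp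
    rw [e, ← hU0]
    have : 0 ≤ U0 := by rw [hU0]; positivity
    have h0 : 0 ≤ s * (h/ω) := by positivity
    exact mul_le_mul (by linarith) hU this (by linarith)
  have h3 : A * h ≤ h * (ε * C * 2 ^ s + A * ρ) := by
    have : ε * C * h * S ≤ ε * C * h * 2 ^ s := mul_le_mul_of_nonneg_left hS2 (by positivity)
    nlinarith
  have : A ≤ ε * C * 2 ^ s + A * ρ := by
    by_contra hc
    push Not at hc
    nlinarith
  linarith

theorem outer_arith {ω g s T J κ A ρ : ℝ} (hω : 0 < ω) (hg : 0 < g) (hgω : g < ω) (hs : 1 ≤ s)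
    (hT : T = (ω / (ω - g)) ^ s) (hJ0 : 0 ≤ J) (hJ : J ≤ A * ω / s + κ)
    (hle : J ≤ T * (J - A * ρ * g)) : A * (ρ - 1) ≤ s * κ / ω := by
  set S : ℝ := (1 + -(g / ω)) ^ s with hS
  have hx : g / ω < 1 := (div_lt_one hω).2 hgω
  have hx0 : 0 < g / ω := div_pos hg hω
  have hS0 : 0 < S := Real.rpow_pos_of_pos (by linarith) _
  have hwg : ω - g ≠ 0 := by linarith
  have hwg' : 0 < ω - g := by linarith
  have hST : S * T = 1 := by
    rw [hS, hT, ← Real.mul_rpow (by linarith) (by positivity)]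
    have : (1 + -(g / ω)) * (ω / (ω - g)) = 1 := by field_simp; ring
    rw [this, Real.one_rpow]
  have hS1 : 1 + s * (-(g / ω)) ≤ S := one_add_mul_self_le_rpow_one_add (by linarith) hs
  have h1 : S * J ≤ J - A * ρ * g := by
    have := mul_le_mul_of_nonneg_left hle hS0.le
    rwa [← mul_assoc, hST, one_mul] at this
  have h2 : (1 - S) * J ≤ s * (g / ω) * (A * ω / s + κ) := by
    have : 0 ≤ s * (g/ω) := by positivity
    exact mul_le_mul (by linarith) hJ hJ0 this
  have h3 : s * (g / ω) * (A * ω / s + κ) = g * (A + s * κ / ω) := by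
    have : s ≠ 0 := by linarith
    field_simp
  have : A * ρ ≤ A + s * κ / ω := by
    by_contra hc
    push Not at hc
    nlinarith
  linarith

section
variable {n : ℕ} [NeZero n] {α β A δ ε : ℝ} {F : Set (XX n)}

def Cc (n : ℕ) (α : ℝ) : ℝ := (2 * Rk n α + 3 * volume (ball (0:XX n) 1)).toReal

theorem inner_comp (hα : 0 < α) (hαn : α < n) (hβ : 0 < β) (hA : 0 < A) (hδ : 0 < δ) (hε : 0 < ε)
    (h : ScaledMin α β A δ ε F) {r : ℝ} (hr0 : 0 < r) (hr1 : r < 1)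
    (hsm : ε * Cc n α * 2 ^ (((n:ℝ)+β)/n) < A * (1 - r ^ β))
    (hne : volume (ball 0 r \ F) ≠ 0) : perimeter F ≤ perimeter (F ∪ ball 0 r) := by
  by_contra hcon
  push Not at hcon
  have hnpos : (0:ℝ) < n := by exact_mod_cast Nat.pos_of_ne_zero (NeZero.ne n)
  obtain ⟨hF, hv, -⟩ := id h
  obtain ⟨hp, hV, hu⟩ := sm_finite hα hαn hβ hA hδ h
  have hbfin : volume (ball (0:XX n) 1) ≠ ∞ := measure_ball_lt_top.ne
  have hFfin : volume F ≠ ∞ := by rw [hv]; exact hbfin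
  set D := ball (0:XX n) r \ F with hD
  have hDm : MeasurableSet D := measurableSet_ball.diff hF
  have hdisj : Disjoint F D := Set.disjoint_sdiff_right
  have hG : F ∪ ball 0 r = F ∪ D := by rw [hD, Set.union_diff_self]
  have hDle : volume D ≤ volume (ball (0:XX n) 1) :=
    measure_mono (Set.diff_subset.trans (ball_subset_ball hr1.le))
  have hDfin : volume D ≠ ∞ := ne_top_of_le_ne_top hbfin hDle
  rw [hG] at hcon
  set d := (volume D).toReal with hd
  have hd0 : 0 < d := ENNReal.toReal_pos hne hDfin
  have hdω : d ≤ om n := ENNReal.toReal_mono hbfin hDle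
  have hω := om_pos n
  have hGw : volume (F ∪ D) = ENNReal.ofReal (om n + d) := by
    rw [measure_union hdisj hDm, hv, ENNReal.ofReal_add hω.le hd0.le, hd, om, ENNReal.ofReal_toReal hbfin,
      ENNReal.ofReal_toReal hDfin]
  have hPG : perimeter (F ∪ D) ≠ ∞ := ne_top_of_lt hcon
  have hUD := potEnergy_le hβ hA (Set.diff_subset : D ⊆ ball 0 r) hDm
  have hUDfin : potEnergy β A D ≠ ∞ := ne_top_of_le_ne_top (ENNReal.mul_ne_top ENNReal.ofReal_ne_top hDfin) hUD
  have hUG : potEnergy β A (F ∪ D) = potEnergy β A F + potEnergy β A D := by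
    unfold potEnergy
    rw [lintegral_union hDm hdisj]
  have hUGfin : potEnergy β A (F ∪ D) ≠ ∞ := by rw [hUG]; exact ENNReal.add_ne_top.2 ⟨hu, hUDfin⟩
  obtain ⟨μ, hμ0, hμn, hμβ, hle⟩ := min_real hα hαn hβ hA hδ hε h (hF.union hDm) (by positivity) hGw hPG hUGfin
  have hμ1 : μ ≤ 1 := by
    have : μ ^ n ≤ 1 := by rw [hμn, div_le_one (by positivity)]; linarith
    exact (pow_le_one_iff_of_nonneg hμ0.le (NeZero.ne n)).1 this
  have hPle : (perimeter (F ∪ D)).toReal ≤ (perimeter F).toReal := ENNReal.toReal_mono hp hcon.le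
  have hUle : (potEnergy β A (F ∪ D)).toReal ≤ (potEnergy β A F).toReal + A * r ^ β * d := by
    rw [hUG, ENNReal.toReal_add hu hUDfin]
    have := ENNReal.toReal_mono (ENNReal.mul_ne_top ENNReal.ofReal_ne_top hDfin) hUD
    rw [ENNReal.toReal_mul, ENNReal.toReal_ofReal (by positivity)] at this
    linarith
  have hCfin : 2 * Rk n α + 3 * volume (ball (0:XX n) 1) ≠ ∞ :=
    ENNReal.add_ne_top.2 ⟨ENNReal.mul_ne_top (by simp) (Rk_ne_top hα), ENNReal.mul_ne_top (by simp) hbfin⟩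
  have hVle : (rieszEnergy α (F ∪ D)).toReal ≤ (rieszEnergy α F).toReal + Cc n α * d := by
    have h1 := rieszEnergy_union hαn hDm hdisj
    have h2 : rieszEnergy α (F ∪ D) ≤ rieszEnergy α F + volume D * (2 * Rk n α + 3 * volume (ball (0:XX n) 1)) := by
      rw [hv, add_assoc (2 * Rk n α)] at h1
      refine h1.trans ?_
      gcongr
      calc 2 * volume (ball (0:XX n) 1) + volume D ≤ 2 * volume (ball (0:XX n) 1) + volume (ball (0:XX n) 1) := by gcongr
        _ = 3 * volume (ball (0:XX n) 1) := by ring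
    have h3 := ENNReal.toReal_mono (ENNReal.add_ne_top.2 ⟨hV, ENNReal.mul_ne_top hDfin hCfin⟩) h2
    rw [ENNReal.toReal_add hV (ENNReal.mul_ne_top hDfin hCfin), ENNReal.toReal_mul] at h3
    unfold Cc
    linarith
  have hn1 : (1:ℝ) ≤ n := by exact_mod_cast Nat.one_le_iff_ne_zero.2 (NeZero.ne n)
  have hμa : μ ^ ((n:ℝ) - 1) ≤ 1 := Real.rpow_le_one hμ0.le hμ1 (by linarith)
  have hμb : μ ^ ((n:ℝ) + α) ≤ 1 := Real.rpow_le_one hμ0.le hμ1 (by linarith)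
  have k1 : δ * (μ ^ ((n:ℝ) - 1) * (perimeter (F ∪ D)).toReal) ≤ δ * (perimeter F).toReal := by
    apply mul_le_mul_of_nonneg_left _ hδ.le
    calc _ ≤ 1 * (perimeter (F ∪ D)).toReal := by gcongr
      _ ≤ _ := by linarith
  have k2 : ε * (μ ^ ((n:ℝ) + α) * (rieszEnergy α (F ∪ D)).toReal) ≤
      ε * ((rieszEnergy α F).toReal + Cc n α * d) := by
    apply mul_le_mul_of_nonneg_left _ hε.le
    calc _ ≤ 1 * (rieszEnergy α (F ∪ D)).toReal := by gcongr
      _ ≤ _ := by linarith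
  have k3 : μ ^ ((n:ℝ) + β) * (potEnergy β A (F ∪ D)).toReal ≤
     μ ^ ((n:ℝ) + β) * ((potEnergy β A F).toReal + A * r ^ β * d) :=
    mul_le_mul_of_nonneg_left hUle (by positivity)
  have hs : 1 ≤ ((n:ℝ)+β)/n := by rw [le_div_iff₀ hnpos]; linarith
  have := inner_arith (ρ := r ^ β) (C := Cc n α) hω hd0 hdω hs hε ENNReal.toReal_nonneg hA hμβ
    (U0 := A * om n * (n / (n + β))) (by field_simp) (pot_stab hβ hA hF hv hu).1 (by linarith)
  linarith

theorem outer_comp (hα : 0 < α) (hαn : α < n) (hβ : 0 < β) (hαβ : α < β) (hA : 0 < A) (hδ : 0 < δ) (hε : 0 < ε)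
    (h : ScaledMin α β A δ ε F) {r : ℝ} (hr1 : 1 < r)
    (hsm : (((n:ℝ)+β)/n) * kap n α δ ε / om n < A * (r ^ β - 1))
    (hne : volume (F \ ball 0 r) ≠ 0) : perimeter F ≤ perimeter (F ∩ ball 0 r) := by
  by_contra hcon
  push Not at hcon
  have hnpos : (0:ℝ) < n := by exact_mod_cast Nat.pos_of_ne_zero (NeZero.ne n)
  have hn1 : (1:ℝ) ≤ n := by exact_mod_cast Nat.one_le_iff_ne_zero.2 (NeZero.ne n)
  obtain ⟨hF, hv, -⟩ := id h
  obtain ⟨hp, hV, hu⟩ := sm_finite hα hαn hβ hA hδ h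
  have hbfin : volume (ball (0:XX n) 1) ≠ ∞ := measure_ball_lt_top.ne
  have hFfin : volume F ≠ ∞ := by rw [hv]; exact hbfin
  have hω := om_pos n
  have hs : 1 ≤ ((n:ℝ)+β)/n := by rw [le_div_iff₀ hnpos]; linarith
  have hκ0 : 0 ≤ kap n α δ ε := by unfold kap; positivity
  have hJle := sm_le hα hαn hβ hA hδ hε h
  have hr0 : 0 < r := by linarith
  set D := F \ ball (0:XX n) r with hD
  set G := F ∩ ball (0:XX n) r with hG
  have hDm : MeasurableSet D := hF.diff measurableSet_ball
  have hGm : MeasurableSet G := hF.inter measurableSet_ball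
  have hDfin : volume D ≠ ∞ := ne_top_of_le_ne_top hFfin (measure_mono Set.diff_subset)
  have hGfin : volume G ≠ ∞ := ne_top_of_le_ne_top hFfin (measure_mono Set.inter_subset_left)
  set g := (volume D).toReal with hg
  have hg0 : 0 < g := ENNReal.toReal_pos hne hDfin
  have hPG : perimeter G ≠ ∞ := ne_top_of_lt hcon
  have hUGfin : potEnergy β A G ≠ ∞ := pot_ne_top_mono Set.inter_subset_left hu
  have hUDfin : potEnergy β A D ≠ ∞ := pot_ne_top_mono Set.diff_subset hu
  have hP0 : 0 ≤ (perimeter F).toReal := ENNReal.toReal_nonneg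
  have hV0 : 0 ≤ (rieszEnergy α F).toReal := ENNReal.toReal_nonneg
  have hU0 : 0 ≤ (potEnergy β A F).toReal := ENNReal.toReal_nonneg
  have hρ : 1 < r ^ β := Real.one_lt_rpow hr1 hβ
  have hst : A * (r ^ β - 1) * g ≤ kap n α δ ε := by
    have := (pot_stab hβ hA hF hv hu).2.2 r hr1
    have e1 : 0 ≤ δ * (perimeter F).toReal := by positivity
    have e2 : 0 ≤ ε * (rieszEnergy α F).toReal := by positivity
    linarith
  have hgω : g < om n := by
    have h1 : kap n α δ ε / om n ≤ (((n:ℝ)+β)/n) * kap n α δ ε / om n := by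
      gcongr
      exact le_mul_of_one_le_left hκ0 hs
    have h2 : kap n α δ ε < A * (r ^ β - 1) * om n := by
      rw [← div_lt_iff₀ hω]; linarith
    have h3 : A * (r ^ β - 1) * g < A * (r ^ β - 1) * om n := by linarith
    exact lt_of_mul_lt_mul_left h3 (mul_nonneg hA.le (by linarith))
  have hGw : volume G = ENNReal.ofReal (om n - g) := by
    have h1 := measure_inter_add_sdiff (μ := volume) F (measurableSet_ball (x := (0:XX n)) (ε := r))
    have h2 : (volume G).toReal + g = om n := by
      rw [hg, ← ENNReal.toReal_add hGfin hDfin, h1, hv, om]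
    rw [← h2, add_sub_cancel_right, ENNReal.ofReal_toReal hGfin]
  obtain ⟨μ, hμ0, hμn, hμβ, hle⟩ := min_real hα hαn hβ hA hδ hε h hGm (by linarith) hGw hPG hUGfin
  have hμ1 : 1 ≤ μ := by
    have : 1 ≤ μ ^ n := by rw [hμn, one_le_div (by linarith)]; linarith
    exact (one_le_pow_iff_of_nonneg hμ0.le (NeZero.ne n)).1 this
  have hPle : (perimeter G).toReal ≤ (perimeter F).toReal := ENNReal.toReal_mono hp hcon.le
  have hVle : (rieszEnergy α G).toReal ≤ (rieszEnergy α F).toReal :=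
    ENNReal.toReal_mono hV (rieszEnergy_mono Set.inter_subset_left)
  have hUle : (potEnergy β A G).toReal ≤ (potEnergy β A F).toReal - A * r ^ β * g := by
    have h1 : (potEnergy β A G).toReal + (potEnergy β A D).toReal = (potEnergy β A F).toReal := by
      rw [← ENNReal.toReal_add hUGfin hUDfin, hG, hD, potEnergy_inter_add_diff _ measurableSet_ball]
    have h2 := ENNReal.toReal_mono hUDfin (potEnergy_ge hβ hA hr0.le (S := D) (fun x hx => by
      have := hx.2; simpa using this) hDm)
    rw [ENNReal.toReal_mul, ENNReal.toReal_ofReal (by positivity)] at h2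
    linarith
  have hμa : μ ^ ((n:ℝ) - 1) ≤ μ ^ ((n:ℝ) + β) := Real.rpow_le_rpow_of_exponent_le hμ1 (by linarith)
  have hμb : μ ^ ((n:ℝ) + α) ≤ μ ^ ((n:ℝ) + β) := Real.rpow_le_rpow_of_exponent_le hμ1 (by linarith)
  have k1 : δ * (μ ^ ((n:ℝ) - 1) * (perimeter G).toReal) ≤ δ * (μ ^ ((n:ℝ) + β) * (perimeter F).toReal) := by
    gcongr
  have k2 : ε * (μ ^ ((n:ℝ) + α) * (rieszEnergy α G).toReal) ≤
      ε * (μ ^ ((n:ℝ) + β) * (rieszEnergy α F).toReal) := by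
    gcongr
  have k3 : μ ^ ((n:ℝ) + β) * (potEnergy β A G).toReal ≤
     μ ^ ((n:ℝ) + β) * ((potEnergy β A F).toReal - A * r ^ β * g) :=
    mul_le_mul_of_nonneg_left hUle (by positivity)
  have := outer_arith (A := A) (ρ := r ^ β) (κ := kap n α δ ε)
    (J := δ * (perimeter F).toReal + ε * (rieszEnergy α F).toReal + (potEnergy β A F).toReal)
    hω hg0 hgω hs hμβ (by positivity) (by
      have : A * om n / (((n:ℝ)+β)/n) = A * om n * (n / (n + β)) := by field_simp
      rw [this]; exact hJle) (by
      refine hle.trans ((add_le_add (add_le_add k1 k2) k3).trans (le_of_eq ?_)); ring)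
  linarith

end


section
variable {n : ℕ} [NeZero n] {α β A δ ε : ℝ} {F : Set (XX n)}

theorem close_of_small (hα : 0 < α) (hαn : α < n) (hβ : 0 < β) (hαβ : α < β) (hA : 0 < A) (hδ : 0 < δ) (hε : 0 < ε)
    (h : ScaledMin α β A δ ε F) {η c : ℝ} (hη : 0 < η) (hη2 : η < 1/2) (hc : 0 < c)
    (hKc : Kn n * c < (η / 2) * (1/2)^n)
    (h1 : ε * Cc n α * 2 ^ (((n:ℝ)+β)/n) < A * (1 - (1 - η/2) ^ β))
    (h2 : (((n:ℝ)+β)/n) * kap n α δ ε / om n < A * ((1 + η/2) ^ β - 1))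
    (h3 : kap n α δ ε < A * (1 - (1 - η/2) ^ β) * c ^ n)
    (h4 : kap n α δ ε < A * ((1 + η/2) ^ β - 1) * c ^ n) :
    hausdorffEDist (essBoundary F) (sphere (0 : XX n) 1) ≤ ENNReal.ofReal (2 * η) := by
  have hn : 1 ≤ n := Nat.one_le_iff_ne_zero.2 (NeZero.ne n)
  obtain ⟨hF, hv, -⟩ := id h
  obtain ⟨hp, hV, hu⟩ := sm_finite hα hαn hβ hA hδ h
  have hbfin : volume (ball (0:XX n) 1) ≠ ∞ := measure_ball_lt_top.ne
  have hFfin : volume F ≠ ∞ := by rw [hv]; exact hbfin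
  have hJle := sm_le hα hαn hβ hA hδ hε h
  have hst := pot_stab hβ hA hF hv hu
  have e1 : 0 ≤ δ * (perimeter F).toReal := by positivity
  have e2 : 0 ≤ ε * (rieszEnergy α F).toReal := by positivity
  have q1 : 0 < A * (1 - (1 - η/2) ^ β) := mul_pos hA (by
    have := Real.rpow_lt_one (x := 1 - η/2) (by linarith) (by linarith) hβ
    linarith)
  have q2 : 0 < A * ((1 + η/2) ^ β - 1) := mul_pos hA (by
    have := Real.one_lt_rpow (x := 1 + η/2) (by linarith) hβ
    linarith)
  apply hausdorff_close hF hη hη2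
  · refine inner_vanish hn hF hp (a := 1 - η) (b := 1 - η/2) (c := c) (by linarith) (by linarith) hc
      (by convert hKc using 2; ring) ?_ ?_
    · have hfin : volume (ball (0:XX n) (1 - η/2) \ F) ≠ ∞ :=
        ne_top_of_le_ne_top measure_ball_lt_top.ne (measure_mono Set.diff_subset)
      rw [← ENNReal.ofReal_toReal hfin]
      apply ENNReal.ofReal_le_ofReal
      have := hst.2.1 (1 - η/2) (by linarith) (by linarith)
      have : A * (1 - (1 - η/2) ^ β) * (volume (ball (0:XX n) (1 - η/2) \ F)).toReal ≤
        A * (1 - (1 - η/2) ^ β) * c ^ n := by linarith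
      exact le_of_mul_le_mul_left this q1
    · intro r hra hrb hne
      have hr0 : 0 < r := by linarith
      refine inner_comp hα hαn hβ hA hδ hε h hr0 (by linarith) (h1.trans_le ?_) hne
      have : r ^ β ≤ (1 - η/2) ^ β := Real.rpow_le_rpow hr0.le hrb.le hβ.le
      exact mul_le_mul_of_nonneg_left (by linarith) hA.le
  · refine outer_vanish hn hF hp hFfin (a := 1 + η/2) (b := 1 + η) (c := c) (by linarith) hc
      (by convert hKc using 2; ring) ?_ ?_
    · have hfin : volume (F \ ball (0:XX n) (1 + η/2)) ≠ ∞ :=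
        ne_top_of_le_ne_top hFfin (measure_mono Set.diff_subset)
      rw [← ENNReal.ofReal_toReal hfin]
      apply ENNReal.ofReal_le_ofReal
      have := hst.2.2 (1 + η/2) (by linarith)
      have : A * ((1 + η/2) ^ β - 1) * (volume (F \ ball (0:XX n) (1 + η/2))).toReal ≤
        A * ((1 + η/2) ^ β - 1) * c ^ n := by linarith
      exact le_of_mul_le_mul_left this q2
    · intro r hra hrb hne
      refine outer_comp hα hαn hβ hαβ hA hδ hε h (by linarith) (h2.trans_le ?_) hne
      have : (1 + η/2) ^ β ≤ r ^ β := Real.rpow_le_rpow (by linarith) hra.le hβ.le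
      exact mul_le_mul_of_nonneg_left (by linarith) hA.le

/-- the scaling factor -/
theorem scaledMin_of_isMinimizer (hA : 0 < A) {m lam : ℝ} {E : Set (XX n)}
    (hE : IsMinimizer α β A m E) (hl : 0 < lam) (hlm : m = lam ^ n * om n) :
    ScaledMin α β A (lam ^ (-1 - β)) (lam ^ (α - β)) (lam⁻¹ • E) := by
  obtain ⟨hEm, hEv, hmin⟩ := hE
  have hl' : 0 < lam⁻¹ := inv_pos.2 hl
  have hbfin : volume (ball (0:XX n) 1) ≠ ∞ := measure_ball_lt_top.ne
  have key : ∀ G : Set (XX n), totalEnergy α β A (lam • G) = ENNReal.ofReal (lam ^ ((n:ℝ) + β)) *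
      (ENNReal.ofReal (lam ^ (-1 - β)) * perimeter G + ENNReal.ofReal (lam ^ (α - β)) * rieszEnergy α G
        + potEnergy β A G) := by
    intro G
    rw [totalEnergy_smul hl hA.le, mul_add, mul_add, ← mul_assoc, ← mul_assoc,
      ← ENNReal.ofReal_mul (by positivity), ← ENNReal.ofReal_mul (by positivity),
      ← Real.rpow_add hl, ← Real.rpow_add hl]
    congr 5 <;> ring_nf
  refine ⟨hEm.const_smul₀ _, ?_, ?_⟩
  · rw [vol_smul_set hl', hEv, ← ENNReal.ofReal_mul (by positivity), hlm, ← mul_assoc, ← mul_pow,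
      inv_mul_cancel₀ hl.ne', one_pow, one_mul, om, ENNReal.ofReal_toReal hbfin]
  · intro G hG hGv
    have h1 := hmin (lam • G) (hG.const_smul₀ _) (by
      rw [vol_smul_set hl, hGv, hlm, ENNReal.ofReal_mul (by positivity), om, ENNReal.ofReal_toReal hbfin])
    have h2 : E = lam • (lam⁻¹ • E) := by rw [smul_smul, mul_inv_cancel₀ hl.ne', one_smul]
    rw [h2, key, key] at h1
    have hpos : 0 < lam ^ ((n:ℝ) + β) := by positivity
    exact (ENNReal.mul_le_mul_iff_right (by simpa using hpos) ENNReal.ofReal_ne_top).1 h1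

end

theorem main_tendsto (n : ℕ) [NeZero n] (α β A : ℝ)
    (hα0 : 0 < α) (hαn : α < n) (hβ : 0 < β) (hA : 0 < A) (hαβ : α < β)
    (E : ℝ → Set (XX n))
    (hE : ∀ m, 0 < m → IsMinimizer α β A m (E m)) :
    Filter.Tendsto
      (fun m : ℝ => hausdorffEDist
        (essBoundary ((((volume (unitBall n)).toReal / m) ^ (1 / (n : ℝ))) • E m))
        (Metric.sphere (0 : XX n) 1))
      Filter.atTop (nhds 0) := by
  have hnpos : (0:ℝ) < n := by exact_mod_cast Nat.pos_of_ne_zero (NeZero.ne n)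
  have hω := om_pos n
  let lam : ℝ → ℝ := fun m => (m / om n) ^ (1 / (n:ℝ))
  have hlam : Tendsto lam atTop atTop :=
    (tendsto_rpow_atTop (by positivity)).comp (tendsto_id.atTop_div_const hω)
  have hδ : Tendsto (fun m => lam m ^ (-1 - β)) atTop (nhds 0) := by
    have := (tendsto_rpow_neg_atTop (y := 1 + β) (by linarith)).comp hlam
    refine this.congr fun m => ?_
    simp only [Function.comp]
    congr 1; ring
  have hε : Tendsto (fun m => lam m ^ (α - β)) atTop (nhds 0) := by
    have := (tendsto_rpow_neg_atTop (y := β - α) (by linarith)).comp hlam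
    refine this.congr fun m => ?_
    simp only [Function.comp]
    congr 1; ring
  have hκ : Tendsto (fun m => kap n α (lam m ^ (-1 - β)) (lam m ^ (α - β))) atTop (nhds 0) := by
    have := (hδ.mul_const (perimeter (ball (0:XX n) 1)).toReal).add
      (hε.mul_const (rieszEnergy α (ball (0:XX n) 1)).toReal)
    simpa [kap] using this
  have hscaled : ∀ m, 0 < m → 0 < lam m ∧ ScaledMin α β A (lam m ^ (-1 - β)) (lam m ^ (α - β))
      ((((volume (unitBall n)).toReal / m) ^ (1 / (n : ℝ))) • E m) := by
    intro m hm
    have hmo : 0 < m / om n := div_pos hm hω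
    have hl : 0 < lam m := Real.rpow_pos_of_pos hmo _
    refine ⟨hl, ?_⟩
    have e : ((volume (unitBall n)).toReal / m) ^ (1 / (n : ℝ)) = (lam m)⁻¹ := by
      change (om n / m) ^ (1 / (n : ℝ)) = ((m / om n) ^ (1 / (n:ℝ)))⁻¹
      rw [← Real.inv_rpow hmo.le, inv_div]
    rw [e]
    refine scaledMin_of_isMinimizer hA (hE m hm) hl ?_
    have : lam m ^ n = m / om n := by
      change ((m / om n) ^ (1 / (n:ℝ))) ^ n = _
      rw [← Real.rpow_natCast, ← Real.rpow_mul hmo.le, one_div, inv_mul_cancel₀ hnpos.ne', Real.rpow_one]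
    rw [this, div_mul_cancel₀ _ hω.ne']
  rw [ENNReal.tendsto_nhds_zero]
  intro t ht
  obtain ⟨η, hη, hη2, hηt⟩ : ∃ η : ℝ, 0 < η ∧ η < 1/2 ∧ ENNReal.ofReal (2 * η) ≤ t := by
    by_cases htt : t = ∞
    · exact ⟨1/4, by norm_num, by norm_num, by rw [htt]; exact le_top⟩
    · have h0 : 0 < t.toReal := ENNReal.toReal_pos ht.ne' htt
      refine ⟨min (1/4) (t.toReal / 2), by positivity, ?_, ?_⟩
      · exact (min_le_left _ _).trans_lt (by norm_num)
      · rw [← ENNReal.ofReal_toReal htt]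
        apply ENNReal.ofReal_le_ofReal
        rw [ENNReal.ofReal_toReal htt]
        have := min_le_right (1/4) (t.toReal / 2)
        linarith
  have hK := Kn_nonneg n
  set c : ℝ := (η / 2) * (1/2)^n / (Kn n + 1) with hcdef
  have hc : 0 < c := by positivity
  have hKc : Kn n * c < (η / 2) * (1/2)^n := by
    have : (Kn n + 1) * c = (η / 2) * (1/2)^n := by rw [hcdef]; field_simp
    linarith
  have q1 : 0 < A * (1 - (1 - η/2) ^ β) := mul_pos hA (by
    have := Real.rpow_lt_one (x := 1 - η/2) (by linarith) (by linarith) hβ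
    linarith)
  have q2 : 0 < A * ((1 + η/2) ^ β - 1) := mul_pos hA (by
    have := Real.one_lt_rpow (x := 1 + η/2) (by linarith) hβ
    linarith)
  have t1 : Tendsto (fun m => lam m ^ (α - β) * Cc n α * 2 ^ (((n:ℝ)+β)/n)) atTop (nhds 0) := by
    simpa using (hε.mul_const (Cc n α)).mul_const ((2:ℝ) ^ (((n:ℝ)+β)/n))
  have t2 : Tendsto (fun m => (((n:ℝ)+β)/n) * kap n α (lam m ^ (-1 - β)) (lam m ^ (α - β)) / om n) atTop (nhds 0) := by
    simpa using (hκ.const_mul (((n:ℝ)+β)/n)).div_const (om n)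
  filter_upwards [t1.eventually_lt_const q1, t2.eventually_lt_const q2,
    hκ.eventually_lt_const (mul_pos q1 (pow_pos hc n)), hκ.eventually_lt_const (mul_pos q2 (pow_pos hc n)),
    eventually_gt_atTop 0] with m h1 h2 h3 h4 hm
  obtain ⟨hl, hS⟩ := hscaled m hm
  exact (close_of_small hα0 hαn hβ hαβ hA (Real.rpow_pos_of_pos hl _) (Real.rpow_pos_of_pos hl _) hS hη hη2 hc hKc
    h1 h2 h3 h4).trans hηt

/-- Hausdorff convergence of the (rescaled) boundaries of large volume minimizers to the
unit sphere, when `α < β`. -/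
theorem statement1 (n : ℕ) (hn : 1 ≤ n) (α β A : ℝ)
    (hα0 : 0 < α) (hαn : α < n) (hβ : 0 < β) (hA : 0 < A) (hαβ : α < β)
    (E : ℝ → Set (EuclideanSpace ℝ (Fin n)))
    (hE : ∀ m, 0 < m → IsMinimizer α β A m (E m)) :
    Filter.Tendsto
      (fun m : ℝ => EMetric.hausdorffEdist
        (essBoundary ((((volume (unitBall n)).toReal / m) ^ (1 / (n : ℝ))) • E m))
        (Metric.sphere (0 : EuclideanSpace ℝ (Fin n)) 1))
      Filter.atTop (nhds 0) := by
  haveI : NeZero n := ⟨by omega⟩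
  exact main_tendsto n α β A hα0 hαn hβ hA hαβ E hE
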